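/- For any two Borel probability measures μ0, μ1 on ℝ² with bounded support there exists a curve t ↦ μ_t (t ∈ [0,1]) of Borel probability measures on ℝ² with finite second moment such that μ_0 = μ0, μ_1 = μ1, W2(μ_s, μ_t) = |s − t| · W2(μ0, μ1) for all s, t ∈ [0,1], and for every N' ≥ 2 and every t ∈ [0,1] one has Ent_{N'}(μ_t) ≤ (1 − t)·Ent_{N'}(μ0) + t·Ent_{N'}(μ1), where entropies are taken with respect to the Lebesgue measure on ℝ². (This expresses that (ℝ², ‖·‖∞, Lebesgue) satisfies CD(0,2).) -/

import Mathlib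

open MeasureTheory ENNReal
open scoped Classical

noncomputable section

/-- Couplings of two measures on ℝ²: probability measures on the product with the given marginals. -/
def Couplings (μ ν : Measure (ℝ × ℝ)) : Set (Measure ((ℝ × ℝ) × (ℝ × ℝ))) :=
  {γ | IsProbabilityMeasure γ ∧ γ.map Prod.fst = μ ∧ γ.map Prod.snd = ν}

/-- Transport cost for the squared sup-norm distance on ℝ². -/
def costSup (γ : Measure ((ℝ × ℝ) × (ℝ × ℝ))) : ℝ≥0∞ :=
  ∫⁻ p, edist p.1 p.2 ^ 2 ∂γ

/-- The quadratic Wasserstein distance W₂ w.r.t. the sup-norm distance on ℝ². -/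
def W2 (μ ν : Measure (ℝ × ℝ)) : ℝ≥0∞ :=
  (⨅ γ ∈ Couplings μ ν, costSup γ) ^ (1/2 : ℝ)

/-- The Rényi-type entropy Ent_N(μ) = -∫ ρ^(1-1/N) dm, where ρ is the density of the
absolutely continuous part of μ with respect to m. -/
def EntN (N : ℝ) (m μ : Measure (ℝ × ℝ)) : ℝ :=
  - ∫ z, (μ.rnDeriv m z).toReal ^ (1 - 1/N) ∂m

open Filter Topology Set Module

/-! The squared norm is neither smooth nor strictly convex, so it is approximated by `C²` uniformly
convex costs with bounded second derivative. For such a cost, Kantorovich duality confines an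
optimal plan to the contact set of a pair of conjugate potentials, and between the barriers which
these potentials impose at time `t` lies a `C^{1,1}` intermediate potential. Its gradient gives a
Lipschitz velocity field, so the plan is carried by a map from its interpolation at time `t`. The
second-order conditions at contact points and the arithmetic-geometric mean inequality make powers
of the Jacobian determinants concave in time, which the change of variables formula turns into
convexity of the entropy. Plans with bounded marginals are compact, so optimal plans for the
approximating costs converge to one for the squared norm, and the inequality survives because the
entropy is lower semicontinuous. -/

section DetTrace

theorem det_rpow_le_of_isPositive {F : Type*} [NormedAddCommGroup F] [InnerProductSpace ℝ F]
    [FiniteDimensional ℝ F] {T : F →ₗ[ℝ] F} (hT : T.IsPositive) {b : ℝ} (hb : 0 ≤ b)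
    (hbn : b * finrank ℝ F ≤ 1) :
    |T.det| ^ b ≤ b * LinearMap.trace ℝ F T + (1 - b * finrank ℝ F) := by
  set ev := hT.isSymmetric.eigenvalues rfl
  have hev : ∀ i, 0 ≤ ev i := hT.nonneg_eigenvalues rfl
  have hdet : T.det = ∏ i, ev i := by simpa using hT.isSymmetric.det_eq_prod_eigenvalues rfl
  have htrace : LinearMap.trace ℝ F T = ∑ i, ev i := by
    simpa using hT.isSymmetric.trace_eq_sum_eigenvalues rfl
  -- AM-GM for the eigenvalues, each with weight `b`, together with `1`, with weight `1 - b n`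
  have amgm := Real.geom_mean_le_arith_mean_weighted (Finset.univ : Finset (Option (Fin _)))
    (fun o => o.elim (1 - b * finrank ℝ F) fun _ => b) (fun o => o.elim 1 ev)
    (by rintro (_ | i) - <;> simp [hb, hbn]) (by simp [mul_comm])
    (by rintro (_ | i) - <;> simp [hev])
  rw [hdet, htrace, abs_of_nonneg (Finset.prod_nonneg fun i _ => hev i),
    ← Real.finsetProd_rpow _ _ fun i _ => hev i]
  simpa [Fintype.prod_option, Fintype.sum_option, ← Finset.mul_sum, add_comm] using amgm

variable {E : Type*} [AddCommGroup E] [Module ℝ E] [FiniteDimensional ℝ E]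

theorem det_rpow_le_of_bilin {H : E →ₗ[ℝ] E →ₗ[ℝ] ℝ} (H_symm : ∀ k l, H k l = H l k)
    (H_pos : ∀ k, k ≠ 0 → 0 < H k k) {T : E →ₗ[ℝ] E} (T_symm : ∀ k l, H (T k) l = H (T l) k)
    (T_nonneg : ∀ k, 0 ≤ H (T k) k) {b : ℝ} (hb : 0 ≤ b) (hbn : b * finrank ℝ E ≤ 1) :
    |T.det| ^ b ≤ b * LinearMap.trace ℝ E T + (1 - b * finrank ℝ E) := by
  let core : InnerProductSpace.Core ℝ E :=
    { inner := fun k l => H k l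
      conj_inner_symm := fun k l => by simpa using H_symm l k
      re_inner_nonneg := fun k => by
        rcases eq_or_ne k 0 with rfl | hk
        · simp
        · simpa using (H_pos k hk).le
      add_left := by simp
      smul_left := by simp
      definite := fun k hk => by_contra fun hk0 => (H_pos k hk0).ne' hk }
  let : NormedAddCommGroup E := core.toNormedAddCommGroup
  let : InnerProductSpace ℝ E := .ofCore core.toCore
  refine det_rpow_le_of_isPositive ⟨fun k l => ?_, fun k => ?_⟩ hb hbn
  · exact (T_symm k l).trans (H_symm (T l) k)
  · exact T_nonneg k

theorem det_rpow_interpolation_le_one {H : E →ₗ[ℝ] E →ₗ[ℝ] ℝ} (H_symm : ∀ k l, H k l = H l k)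
    (H_pos : ∀ k, k ≠ 0 → 0 < H k k) {M : E →ₗ[ℝ] E} (M_symm : ∀ k l, H (M k) l = H (M l) k)
    {t : ℝ} (ht0 : 0 ≤ t) (ht1 : t ≤ 1) (M_le : ∀ k, t * H (M k) k ≤ H k k)
    (le_M : ∀ k, -((1 - t) * H (M k) k) ≤ H k k) {b : ℝ} (hb : 0 ≤ b)
    (hbn : b * finrank ℝ E ≤ 1) :
    (1 - t) * |(LinearMap.id - t • M).det| ^ b +
      t * |(LinearMap.id + (1 - t) • M).det| ^ b ≤ 1 := by
  have backward := det_rpow_le_of_bilin H_symm H_pos (T := LinearMap.id - t • M)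
    (fun k l => by simp [H_symm k l, M_symm k l]) (fun k => by simpa using M_le k) hb hbn
  have forward := det_rpow_le_of_bilin H_symm H_pos (T := LinearMap.id + (1 - t) • M)
    (fun k l => by simp [H_symm k l, M_symm k l])
    (fun k => by simpa using neg_le_iff_add_nonneg.1 (le_M k)) hb hbn
  simp only [map_sub, map_add, map_smul, LinearMap.trace_id, smul_eq_mul] at backward forward
  linarith [mul_le_mul_of_nonneg_left backward (sub_nonneg.2 ht1),
    mul_le_mul_of_nonneg_left forward ht0]

end DetTrace

section ConvexAnalysis

variable {E : Type*} [NormedAddCommGroup E] [NormedSpace ℝ E]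

theorem hasFDerivAt_bilin_self {B : E →L[ℝ] E →L[ℝ] ℝ} (hB : ∀ k l, B k l = B l k) (z : E) :
    HasFDerivAt (fun z => B z z) ((2 : ℝ) • B z) z := by
  refine (B.hasFDerivAt.clm_apply (hasFDerivAt_id z)).congr_fderiv ?_
  ext k
  simp [hB k z, two_mul]

theorem nonneg_second_derivative_of_isMin {f : E → ℝ} {f' : E → E →L[ℝ] ℝ}
    {f'' : E →L[ℝ] E →L[ℝ] ℝ} {z : E} (hf : ∀ w, HasFDerivAt f (f' w) w)
    (hf' : HasFDerivAt f' f'' z) (hmin : ∀ w, f z ≤ f w) (k : E) : 0 ≤ f'' k k := by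
  have hline (s : ℝ) : HasDerivAt (fun s : ℝ => z + s • k) k s := by
    simpa using ((hasDerivAt_id s).smul_const k).const_add z
  have hderiv (s : ℝ) : HasDerivAt (fun s : ℝ => f (z + s • k)) (f' (z + s • k) k) s :=
    (hf _).comp_hasDerivAt s (hline s)
  have hf'z : f' z = 0 := IsLocalMin.hasFDerivAt_eq_zero (Eventually.of_forall hmin) (hf z)
  have hderiv2 : HasDerivAt (fun s : ℝ => f' (z + s • k) k) (f'' k k) 0 := by
    have h : HasFDerivAt f' f'' (z + (0 : ℝ) • k) := by simpa using hf'
    have hline' : HasDerivAt (fun s : ℝ => f' (z + s • k)) (f'' k) 0 :=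
      h.comp_hasDerivAt (0 : ℝ) (hline 0)
    simpa using hline'.clm_apply (hasDerivAt_const (0 : ℝ) k)
  have hslope : Tendsto (fun s : ℝ => s⁻¹ * f' (z + s • k) k) (𝓝[>] 0) (𝓝 (f'' k k)) := by
    simpa [hf'z] using hderiv2.tendsto_slope_zero_right
  by_contra! hneg
  obtain ⟨ε, hε : 0 < ε, hε_neg⟩ :=
    mem_nhdsGT_iff_exists_Ioo_subset.1 (hslope.eventually (gt_mem_nhds hneg))
  obtain ⟨s, hs, hs_eq⟩ := exists_hasDerivAt_eq_slope (fun s : ℝ => f (z + s • k))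
    (fun s => f' (z + s • k) k) (half_pos hε)
    (fun s _ => (hderiv s).continuousAt.continuousWithinAt) (fun s _ => hderiv s)
  have hpos : 0 ≤ f' (z + s • k) k := by
    rw [hs_eq]
    refine div_nonneg ?_ (by linarith)
    simpa using hmin (z + (ε / 2) • k)
  have : s⁻¹ * f' (z + s • k) k < 0 := hε_neg ⟨hs.1, by linarith [hs.2]⟩
  exact this.not_ge (mul_nonneg (inv_nonneg.2 hs.1.le) hpos)

theorem convexOn_univ_of_forall_exists_support {f : E → ℝ}
    (hf : ∀ z, ∃ p : E →L[ℝ] ℝ, ∀ k, f z + p k ≤ f (z + k)) : ConvexOn ℝ univ f := by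
  refine ⟨convex_univ, fun x _ y _ a b ha hb hab => ?_⟩
  obtain ⟨p, hp⟩ := hf (a • x + b • y)
  have hx := hp (x - (a • x + b • y))
  have hy := hp (y - (a • x + b • y))
  simp only [add_sub_cancel, map_sub, map_add, map_smul, smul_eq_mul] at hx hy ⊢
  obtain rfl : b = 1 - a := by linarith
  nlinarith [mul_le_mul_of_nonneg_left hx ha, mul_le_mul_of_nonneg_left hy hb]

theorem exists_support_of_convexOn_univ {f : E → ℝ} (hf : ConvexOn ℝ univ f)
    (hcont : Continuous f) (z : E) : ∃ p : E →L[ℝ] ℝ, ∀ k, f z + p k ≤ f (z + k) := by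
  have hopen : IsOpen {p : E × ℝ | p.1 ∈ univ ∧ f p.1 < p.2} := by
    simpa using isOpen_lt (hcont.comp continuous_fst) continuous_snd
  obtain ⟨L, hL⟩ := geometric_hahn_banach_open_point hf.convex_strict_epigraph hopen
    (x := (z, f z)) (by simp)
  have L_add (k : E) (r : ℝ) : L (z + k, r) = L (z, f z) + L (k, 0) + (r - f z) * L (0, 1) := by
    have : ((z + k, r) : E × ℝ) = (z, f z) + (k, 0) + (r - f z) • (0, 1) := by ext <;> simp
    rw [this, map_add, map_add, map_smul, smul_eq_mul]
  have h_above (k : E) (r : ℝ) (hr : f (z + k) < r) : L (k, 0) + (r - f z) * L (0, 1) < 0 := by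
    have := hL (z + k, r) ⟨mem_univ _, hr⟩
    rw [L_add] at this
    linarith
  set c := L (0, 1)
  have hc : c < 0 := by
    simpa [← Prod.zero_eq_mk] using h_above 0 (f z + 1) (by simp)
  refine ⟨(-c)⁻¹ • L.comp (.inl ℝ E ℝ), fun k => le_of_forall_gt fun r hr => ?_⟩
  have := h_above k r hr
  have hslope : (-c)⁻¹ * L (k, 0) < r - f z := by
    rw [inv_mul_lt_iff₀ (neg_pos.2 hc)]
    linarith
  simp only [smul_apply, ContinuousLinearMap.comp_apply, ContinuousLinearMap.inl_apply,
    smul_eq_mul]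
  linarith

theorem hasFDerivAt_of_quadratic_bounds {f : E → ℝ} {p : E →L[ℝ] ℝ} {κ : ℝ} {z : E}
    (lower : ∀ k, f z + p k ≤ f (z + k)) (upper : ∀ k, f (z + k) ≤ f z + p k + κ * ‖k‖ ^ 2) :
    HasFDerivAt f p z := by
  rw [hasFDerivAt_iff_isLittleO_nhds_zero]
  have hO : (fun k => f (z + k) - f z - p k) =O[𝓝 0] fun k => ‖k‖ ^ 2 := by
    refine .of_bound κ (.of_forall fun k => ?_)
    rw [Real.norm_of_nonneg (by linarith [lower k]), norm_pow, norm_norm]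
    linarith [upper k]
  refine hO.trans_isLittleO ?_
  simpa using Asymptotics.isLittleO_norm_pow_id (E' := E) (n := 2) (by norm_num)

theorem lipschitzWith_of_quadratic_bounds {f : E → ℝ} {p : E → E →L[ℝ] ℝ} {κ : NNReal}
    (lower : ∀ z k, f z + p z k ≤ f (z + k))
    (upper : ∀ z k, f (z + k) ≤ f z + p z k + κ * ‖k‖ ^ 2) : LipschitzWith (4 * κ) p := by
  have diff_le (z d k : E) : (p (z + d) - p z) k ≤ κ * (‖d‖ + ‖k‖) ^ 2 := by
    have hsum := upper z (d + k)
    rw [← add_assoc, map_add] at hsum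
    have hnorm : (κ : ℝ) * ‖d + k‖ ^ 2 ≤ κ * (‖d‖ + ‖k‖) ^ 2 := by
      gcongr
      exact norm_add_le d k
    rw [sub_apply]
    linarith [lower (z + d) k, lower z d]
  have norm_diff_le (z d : E) : ‖p (z + d) - p z‖ ≤ 4 * κ * ‖d‖ := by
    rcases eq_or_ne d 0 with rfl | hd
    · simp
    have hd : 0 < ‖d‖ := norm_pos_iff.2 hd
    refine ContinuousLinearMap.opNorm_le_of_unit_norm (by positivity) fun x hx => ?_
    have hpos := diff_le z d (‖d‖ • x)
    have hneg := diff_le z d (-(‖d‖ • x))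
    simp only [map_neg, norm_neg, map_smul, norm_smul, hx, norm_norm, mul_one, smul_eq_mul]
      at hpos hneg
    rw [Real.norm_eq_abs, abs_le]
    constructor <;> nlinarith
  refine LipschitzWith.of_dist_le_mul fun z w => ?_
  have := norm_diff_le w (z - w)
  rw [add_sub_cancel] at this
  simpa [dist_eq_norm] using this

theorem hasFDerivAt_and_lipschitzWith_of_convexOn_of_semiconcave {f : E → ℝ}
    (hf : ConvexOn ℝ univ f) (hcont : Continuous f) {κ : NNReal}
    (hκ : ∀ z k, f (z + k) + f (z - k) ≤ 2 * f z + κ * ‖k‖ ^ 2) :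
    ∃ p : E → E →L[ℝ] ℝ, (∀ z, HasFDerivAt f (p z) z) ∧ LipschitzWith (4 * κ) p := by
  choose p lower using exists_support_of_convexOn_univ hf hcont
  have upper (z k : E) : f (z + k) ≤ f z + p z k + κ * ‖k‖ ^ 2 := by
    have := lower z (-k)
    rw [← sub_eq_add_neg, map_neg] at this
    linarith [hκ z k]
  exact ⟨p, fun z => hasFDerivAt_of_quadratic_bounds (lower z) (upper z),
    lipschitzWith_of_quadratic_bounds lower upper⟩

end ConvexAnalysis

section ConvexEnvelope

variable {E ι : Type*} [NormedAddCommGroup E] [NormedSpace ℝ E]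

/-- The lower convex envelope of a family of functions: the largest convex function below all of
them (if there is one; otherwise the value is that of an empty or unbounded supremum). -/
def convexEnvelope (r : ι → E → ℝ) (z : E) : ℝ :=
  ⨆ g : {g : E → ℝ // ConvexOn ℝ univ g ∧ ∀ i z, g z ≤ r i z}, g.1 z

variable {r : ι → E → ℝ}

theorem le_convexEnvelope [Nonempty ι] {g : E → ℝ} (hg : ConvexOn ℝ univ g)
    (hgr : ∀ i z, g z ≤ r i z) (z : E) : g z ≤ convexEnvelope r z :=
  le_ciSup (f := fun g : {g : E → ℝ // ConvexOn ℝ univ g ∧ ∀ i z, g z ≤ r i z} => g.1 z)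
    ⟨r (Classical.arbitrary ι) z, by rintro _ ⟨g, rfl⟩; exact g.2.2 _ z⟩ ⟨g, hg, hgr⟩

variable {g₀ : E → ℝ} (hg₀ : ConvexOn ℝ univ g₀) (hg₀r : ∀ i z, g₀ z ≤ r i z)

include hg₀ hg₀r

theorem convexEnvelope_le_of_forall {z : E} {a : ℝ}
    (ha : ∀ g, ConvexOn ℝ univ g → (∀ i z, g z ≤ r i z) → g z ≤ a) : convexEnvelope r z ≤ a :=
  haveI : Nonempty {g : E → ℝ // ConvexOn ℝ univ g ∧ ∀ i z, g z ≤ r i z} := ⟨⟨g₀, hg₀, hg₀r⟩⟩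
  ciSup_le fun g => ha g.1 g.2.1 g.2.2

theorem convexEnvelope_le (i : ι) (z : E) : convexEnvelope r z ≤ r i z :=
  convexEnvelope_le_of_forall hg₀ hg₀r fun _ _ hgr => hgr i z

theorem convexOn_convexEnvelope [Nonempty ι] : ConvexOn ℝ univ (convexEnvelope r) := by
  refine ⟨convex_univ, fun x _ y _ a b ha hb hab => ?_⟩
  refine convexEnvelope_le_of_forall hg₀ hg₀r fun g hg hgr => ?_
  refine (hg.2 (mem_univ x) (mem_univ y) ha hb hab).trans ?_
  simp only [smul_eq_mul]
  gcongr <;> exact le_convexEnvelope hg hgr _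

-- The average of two translates of the envelope, lowered by the semiconcavity defect, is again
-- convex and below every `r i`, hence below the envelope.
theorem convexEnvelope_semiconcave [Nonempty ι] {κ : ℝ}
    (hκ : ∀ i z k, r i (z + k) + r i (z - k) ≤ 2 * r i z + κ * ‖k‖ ^ 2) (z k : E) :
    convexEnvelope r (z + k) + convexEnvelope r (z - k) ≤
      2 * convexEnvelope r z + κ * ‖k‖ ^ 2 := by
  have hconv := convexOn_convexEnvelope hg₀ hg₀r
  have havg : ConvexOn ℝ univ fun w =>
      (1 / 2 : ℝ) • (convexEnvelope r (w + k) + convexEnvelope r (w + -k)) +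
        -(κ / 2 * ‖k‖ ^ 2) := by
    have translate (d : E) : ConvexOn ℝ univ fun w => convexEnvelope r (w + d) :=
      hconv.translate_left d
    exact (((translate k).add (translate (-k))).smul (by norm_num)).add_const _
  have := le_convexEnvelope (r := r) havg (fun i w => ?_) z
  · simp only [smul_eq_mul, ← sub_eq_add_neg] at this
    linarith
  · simp only [smul_eq_mul, ← sub_eq_add_neg]
    linarith [hκ i w k, convexEnvelope_le hg₀ hg₀r i (w + k),
      convexEnvelope_le hg₀ hg₀r i (w - k)]

end ConvexEnvelope

section Insertion

theorem exists_symm_bilin_ge_norm_sq (E : Type*) [NormedAddCommGroup E] [NormedSpace ℝ E]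
    [FiniteDimensional ℝ E] :
    ∃ B : E →L[ℝ] E →L[ℝ] ℝ, (∀ k l, B k l = B l k) ∧ ∀ k, ‖k‖ ^ 2 ≤ B k k := by
  let L : E →L[ℝ] EuclideanSpace ℝ (Fin (finrank ℝ E)) :=
    ‖(toEuclidean (E := E)).symm.toContinuousLinearMap‖ •
      (toEuclidean (E := E)).toContinuousLinearMap
  refine ⟨(innerSL ℝ).bilinearComp L L, fun k l => real_inner_comm (L l) (L k), fun k => ?_⟩
  have hL : ‖k‖ ≤ ‖L k‖ := by
    have := (toEuclidean (E := E)).symm.toContinuousLinearMap.le_opNorm (toEuclidean k)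
    simpa [L, norm_smul] using this
  simp only [ContinuousLinearMap.bilinearComp_apply, innerSL_apply_apply,
    real_inner_self_eq_norm_sq]
  gcongr

variable {E ι : Type*} [NormedAddCommGroup E] [NormedSpace ℝ E] [FiniteDimensional ℝ E]

-- Adding a large quadratic form makes the lower functions convex and keeps the upper ones
-- semiconcave, so that the convex envelope of the latter separates the two families.
theorem exists_C11_between [Nonempty ι] {l r : ι → E → ℝ} {κ : NNReal}
    (hl : ∀ i z, ∃ p : E →L[ℝ] ℝ, ∀ k, l i z + p k - κ * ‖k‖ ^ 2 ≤ l i (z + k))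
    (hr : ∀ i z, ∃ p : E →L[ℝ] ℝ, ∀ k, r i (z + k) ≤ r i z + p k + κ * ‖k‖ ^ 2)
    (hlr : ∀ i j z, l i z ≤ r j z) :
    ∃ (u : E → ℝ) (p : E → E →L[ℝ] ℝ) (C : NNReal), (∀ i z, l i z ≤ u z) ∧
      (∀ i z, u z ≤ r i z) ∧ (∀ z, HasFDerivAt u (p z) z) ∧ LipschitzWith C p := by
  obtain ⟨B, B_symm, B_ge⟩ := exists_symm_bilin_ge_norm_sq E
  have B_add (z k : E) : B (z + k) (z + k) = B z z + 2 * B z k + B k k := by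
    simp only [map_add, add_apply, B_symm k z]; ring
  have B_le (k : E) : B k k ≤ ‖B‖ * ‖k‖ ^ 2 := by
    simpa [sq, mul_assoc] using (le_abs_self _).trans (B.le_opNorm₂ k k)
  let l' (i : ι) (z : E) : ℝ := l i z + κ * B z z
  let r' (i : ι) (z : E) : ℝ := r i z + κ * B z z
  have hlr' (i j : ι) (z : E) : l' i z ≤ r' j z := by simpa [l', r'] using hlr i j z
  have l'_convex (i : ι) : ConvexOn ℝ univ (l' i) := by
    refine convexOn_univ_of_forall_exists_support fun z => ?_
    obtain ⟨p, hp⟩ := hl i z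
    refine ⟨p + (2 * κ : ℝ) • B z, fun k => ?_⟩
    simp only [l', B_add, add_apply, smul_apply, smul_eq_mul]
    linarith [hp k, mul_le_mul_of_nonneg_left (B_ge k) κ.coe_nonneg]
  have r'_semiconcave (i : ι) (z k : E) :
      r' i (z + k) + r' i (z - k) ≤ 2 * r' i z + (2 * κ * (1 + ‖B‖₊) : NNReal) * ‖k‖ ^ 2 := by
    obtain ⟨p, hp⟩ := hr i z
    have h_neg := hp (-k)
    have B_sub := B_add z (-k)
    simp only [← sub_eq_add_neg, map_neg, norm_neg, neg_apply, neg_neg] at h_neg B_sub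
    simp only [r', B_add, B_sub, NNReal.coe_mul, NNReal.coe_add, NNReal.coe_ofNat,
      NNReal.coe_one, coe_nnnorm]
    nlinarith [hp k, mul_le_mul_of_nonneg_left (B_le k) κ.coe_nonneg]
  let i₀ : ι := Classical.arbitrary ι
  have G_convex := convexOn_convexEnvelope (l'_convex i₀) (hlr' i₀)
  obtain ⟨p, hp, p_lip⟩ := hasFDerivAt_and_lipschitzWith_of_convexOn_of_semiconcave G_convex
    (continuousOn_univ.1 (G_convex.continuousOn isOpen_univ))
    (convexEnvelope_semiconcave (l'_convex i₀) (hlr' i₀) r'_semiconcave)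
  refine ⟨fun z => convexEnvelope r' z - κ * B z z, fun z => p z - (κ : ℝ) • (2 : ℝ) • B z, _,
    fun i z => ?_, fun i z => ?_,
    fun z => (hp z).sub ((hasFDerivAt_bilin_self B_symm z).const_mul _),
    p_lip.sub (((κ : ℝ) • (2 : ℝ) • B).lipschitz)⟩
  · simpa [l', le_sub_iff_add_le] using le_convexEnvelope (l'_convex i) (hlr' i) z
  · simpa [r', sub_le_iff_le_add] using convexEnvelope_le (l'_convex i₀) (hlr' i₀) i z

end Insertion

section RegularCost

variable {E : Type*} [NormedAddCommGroup E] [NormedSpace ℝ E]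

/-- A `C²` cost function that is uniformly convex with modulus `m` and uniformly smooth with
modulus `K`. Along such costs displacement interpolations have Lipschitz velocities; they serve as
approximations of the squared norm, which need be neither smooth nor strictly convex. -/
structure IsRegularCost (h : E → ℝ) (m K : ℝ) : Prop where
  pos : 0 < m
  le : m ≤ K
  contDiff : ContDiff ℝ 2 h
  lower : ∀ v k, h v + fderiv ℝ h v k + m * ‖k‖ ^ 2 ≤ h (v + k)
  upper : ∀ v k, h (v + k) ≤ h v + fderiv ℝ h v k + K * ‖k‖ ^ 2

namespace IsRegularCost

variable {h : E → ℝ} {m K : ℝ} (hh : IsRegularCost h m K)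

include hh

theorem differentiable : Differentiable ℝ h := hh.contDiff.differentiable (by norm_num)

theorem hasFDerivAt_fderiv (v : E) :
    HasFDerivAt (fderiv ℝ h) (fderiv ℝ (fderiv ℝ h) v) v :=
  ((hh.contDiff.fderiv_right (m := 1) (by norm_num)).differentiable (by norm_num) v).hasFDerivAt

theorem convexOn : ConvexOn ℝ univ h :=
  convexOn_univ_of_forall_exists_support fun v => ⟨fderiv ℝ h v, fun k => by
    linarith [hh.lower v k, mul_nonneg hh.pos.le (sq_nonneg ‖k‖)]⟩

theorem norm_sub_le_norm_fderiv_sub (v w : E) :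
    m * ‖v - w‖ ≤ ‖fderiv ℝ h v - fderiv ℝ h w‖ := by
  rcases eq_or_ne v w with rfl | hne
  · simp
  have hpos : 0 < ‖v - w‖ := norm_pos_iff.2 (sub_ne_zero.2 hne)
  have hv := hh.lower v (w - v)
  have hw := hh.lower w (v - w)
  rw [add_sub_cancel] at hv hw
  rw [norm_sub_rev w v, ← neg_sub v w, map_neg] at hv
  have hop := (le_abs_self _).trans ((fderiv ℝ h v - fderiv ℝ h w).le_opNorm (v - w))
  rw [sub_apply] at hop
  refine le_of_mul_le_mul_right ?_ hpos
  nlinarith [mul_nonneg hh.pos.le (sq_nonneg ‖v - w‖)]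

theorem fderiv_injective : Function.Injective (fderiv ℝ h) := fun v w hvw => by
  have := hh.norm_sub_le_norm_fderiv_sub v w
  rw [hvw, sub_self, norm_zero] at this
  exact sub_eq_zero.1 (norm_le_zero_iff.1 (nonpos_of_mul_nonpos_right this hh.pos))

-- A primitive of `fderiv ℝ h - ξ` is coercive, hence has a critical point.
theorem fderiv_surjective [FiniteDimensional ℝ E] : Function.Surjective (fderiv ℝ h) := fun ξ => by
  have lower_bound (v : E) : h 0 + ‖v‖ * (m * ‖v‖ - ‖fderiv ℝ h 0 - ξ‖) ≤ h v - ξ v := by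
    have hv := hh.lower 0 v
    rw [zero_add] at hv
    have hop := (abs_le.1 ((fderiv ℝ h 0 - ξ).le_opNorm v)).1
    rw [sub_apply] at hop
    linarith
  have hnorm := tendsto_norm_cocompact_atTop (E := E)
  have coercive : Tendsto (fun v => h v - ξ v) (cocompact E) atTop :=
    tendsto_atTop_mono lower_bound <| tendsto_atTop_add_const_left _ _ <|
      hnorm.atTop_mul_atTop₀ <| tendsto_atTop_add_const_right _ _ <| hnorm.const_mul_atTop hh.pos
  obtain ⟨v, hv⟩ :=
    (hh.differentiable.continuous.sub ξ.continuous).exists_forall_le coercive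
  have hcrit : HasFDerivAt (fun v => h v - ξ v) (fderiv ℝ h v - ξ) v :=
    (hh.differentiable v).hasFDerivAt.sub ξ.hasFDerivAt
  exact ⟨v, sub_eq_zero.1 (IsLocalMin.hasFDerivAt_eq_zero (.of_forall hv) hcrit)⟩

theorem second_fderiv_symm (v k l : E) :
    fderiv ℝ (fderiv ℝ h) v k l = fderiv ℝ (fderiv ℝ h) v l k :=
  second_derivative_symmetric (fun w => (hh.differentiable w).hasFDerivAt)
    (hh.hasFDerivAt_fderiv v) k l

theorem second_fderiv_pos [FiniteDimensional ℝ E] (v : E) {k : E} (hk : k ≠ 0) :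
    0 < fderiv ℝ (fderiv ℝ h) v k k := by
  obtain ⟨B, B_symm, B_ge, c, hc, B_le⟩ :
      ∃ B : E →L[ℝ] E →L[ℝ] ℝ, (∀ k l, B k l = B l k) ∧ (∀ k, ‖k‖ ^ 2 ≤ B k k) ∧
        ∃ c : ℝ, 0 < c ∧ ∀ k, c * B k k ≤ m * ‖k‖ ^ 2 := by
    obtain ⟨B, B_symm, B_ge⟩ := exists_symm_bilin_ge_norm_sq E
    refine ⟨B, B_symm, B_ge, m / (‖B‖ + 1), div_pos hh.pos (by positivity), fun k => ?_⟩
    have : B k k ≤ ‖B‖ * ‖k‖ ^ 2 := by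
      simpa [sq, mul_assoc] using (le_abs_self _).trans (B.le_opNorm₂ k k)
    rw [div_mul_eq_mul_div, div_le_iff₀ (by positivity)]
    nlinarith [hh.pos, sq_nonneg ‖k‖]
  -- `w ↦ h w - h' v w - c B (w - v) (w - v)` is minimal at `v`
  have hderiv (w : E) : HasFDerivAt
      (fun w => h w - fderiv ℝ h v w - c * B (w - v) (w - v))
      (fderiv ℝ h w - fderiv ℝ h v - (2 * c) • B (w - v)) w := by
    have hB := (hasFDerivAt_bilin_self B_symm (w - v)).comp w ((hasFDerivAt_id w).sub_const v)
    refine (((hh.differentiable w).hasFDerivAt.sub (fderiv ℝ h v).hasFDerivAt).sub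
      (hB.const_mul c)).congr_fderiv ?_
    ext k
    simp
    ring
  have hderiv2 : HasFDerivAt (fun w => fderiv ℝ h w - fderiv ℝ h v - (2 * c) • B (w - v))
      (fderiv ℝ (fderiv ℝ h) v - (2 * c) • B) v := by
    have hB : HasFDerivAt (fun w => B (w - v)) B v :=
      (B.hasFDerivAt.comp v ((hasFDerivAt_id v).sub_const v)).congr_fderiv (by ext; simp)
    exact ((hh.hasFDerivAt_fderiv v).sub_const _).sub (hB.const_smul (2 * c))
  have := nonneg_second_derivative_of_isMin hderiv hderiv2 (fun w => by
    have := hh.lower v (w - v)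
    rw [add_sub_cancel, map_sub] at this
    simp only [sub_self, map_zero, mul_zero]
    linarith [B_le (w - v)]) k
  simp only [sub_apply, smul_apply, smul_eq_mul] at this
  have hBk : 0 < B k k := (pow_pos (norm_pos_iff.2 hk) 2).trans_le (B_ge k)
  linarith [mul_pos hc hBk]

end IsRegularCost

end RegularCost

section Velocity

variable {E : Type*} [NormedAddCommGroup E] [NormedSpace ℝ E]

/-- The position at time `t` of a particle moving uniformly from `p.1` at time `0` to `p.2` at
time `1`. -/
def interpolate (t : ℝ) (p : E × E) : E := (1 - t) • p.1 + t • p.2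

/-- A set `Γ` of pairs on which the dual potentials `φ` and `ψ` of the transport problem with cost
`c` are tight, the constraint being imposed only between points occurring in `Γ`. -/
structure IsContactSet {X Y : Type*} (c : X × Y → ℝ) (φ : X → ℝ) (ψ : Y → ℝ)
    (Γ : Set (X × Y)) : Prop where
  le : ∀ p ∈ Γ, ∀ q ∈ Γ, φ p.1 + ψ q.2 ≤ c (p.1, q.2)
  eq : ∀ p ∈ Γ, φ p.1 + ψ p.2 = c p

/-- The lower bound that the initial point `p.1` imposes on the intermediate-time potential. -/
def lowerBarrier (h φ : E → ℝ) (t : ℝ) (p : E × E) (z : E) : ℝ :=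
  φ p.1 - t * h (t⁻¹ • (z - p.1))

/-- The upper bound that the final point `p.2` imposes on the intermediate-time potential. The
velocity `(p.2 - z) / (1 - t)` is written as a multiple of `z - p.2`. -/
def upperBarrier (h ψ : E → ℝ) (t : ℝ) (p : E × E) (z : E) : ℝ :=
  -ψ p.2 + (1 - t) * h ((-(1 - t)⁻¹) • (z - p.2))

theorem inv_smul_interpolate_sub_fst {t : ℝ} (ht : t ≠ 0) (p : E × E) :
    t⁻¹ • (interpolate t p - p.1) = p.2 - p.1 := by
  rw [interpolate, show (1 - t) • p.1 + t • p.2 - p.1 = t • (p.2 - p.1) by module,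
    inv_smul_smul₀ ht]

theorem neg_inv_smul_interpolate_sub_snd {t : ℝ} (ht : 1 - t ≠ 0) (p : E × E) :
    (-(1 - t)⁻¹) • (interpolate t p - p.2) = p.2 - p.1 := by
  rw [interpolate, show (1 - t) • p.1 + t • p.2 - p.2 = -((1 - t) • (p.2 - p.1)) by module,
    neg_smul_neg, inv_smul_smul₀ ht]

theorem lowerBarrier_le_upperBarrier {h φ ψ : E → ℝ} (hh : ConvexOn ℝ univ h)
    {Γ : Set (E × E)} (hΓ : IsContactSet (fun p => h (p.2 - p.1)) φ ψ Γ) {t : ℝ} (ht0 : 0 < t)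
    (ht1 : t < 1) {p q : E × E} (hp : p ∈ Γ) (hq : q ∈ Γ) (z : E) :
    lowerBarrier h φ t p z ≤ upperBarrier h ψ t q z := by
  have ht1' : 0 < 1 - t := sub_pos.2 ht1
  have hconv := hh.2 (mem_univ (t⁻¹ • (z - p.1))) (mem_univ ((-(1 - t)⁻¹) • (z - q.2)))
    ht0.le ht1'.le (by ring)
  have : t • t⁻¹ • (z - p.1) + (1 - t) • (-(1 - t)⁻¹) • (z - q.2) = q.2 - p.1 := by
    rw [neg_smul, smul_neg, smul_inv_smul₀ ht0.ne', smul_inv_smul₀ ht1'.ne']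
    abel
  rw [this, smul_eq_mul, smul_eq_mul] at hconv
  rw [lowerBarrier, upperBarrier]
  linarith [hΓ.le p hp q hq]

theorem lowerBarrier_interpolate {h φ ψ : E → ℝ} {Γ : Set (E × E)}
    (hΓ : IsContactSet (fun p => h (p.2 - p.1)) φ ψ Γ) {t : ℝ} (ht0 : t ≠ 0)
    (ht1 : 1 - t ≠ 0) {p : E × E} (hp : p ∈ Γ) :
    lowerBarrier h φ t p (interpolate t p) = upperBarrier h ψ t p (interpolate t p) := by
  rw [lowerBarrier, upperBarrier, inv_smul_interpolate_sub_fst ht0,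
    neg_inv_smul_interpolate_sub_snd ht1]
  linarith [hΓ.eq p hp]

namespace IsRegularCost

variable {h : E → ℝ} {m K : ℝ} (hh : IsRegularCost h m K) {t : ℝ}

include hh

theorem lowerBarrier_semiconvex (ht : 0 < t) (φ : E → ℝ) (p : E × E) (z k : E) :
    lowerBarrier h φ t p z + (-fderiv ℝ h (t⁻¹ • (z - p.1))) k - K / t * ‖k‖ ^ 2 ≤
      lowerBarrier h φ t p (z + k) := by
  have := mul_le_mul_of_nonneg_left (hh.upper (t⁻¹ • (z - p.1)) (t⁻¹ • k)) ht.le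
  rw [← smul_add, norm_smul, map_smul, sub_add_eq_add_sub, norm_inv, Real.norm_of_nonneg ht.le,
    smul_eq_mul, mul_add, mul_add, mul_inv_cancel_left₀ ht.ne',
    show t * (K * (t⁻¹ * ‖k‖) ^ 2) = K / t * ‖k‖ ^ 2 by field_simp] at this
  rw [lowerBarrier, lowerBarrier, neg_apply]
  linarith

theorem upperBarrier_semiconcave (ht : t < 1) (ψ : E → ℝ) (p : E × E) (z k : E) :
    upperBarrier h ψ t p (z + k) ≤ upperBarrier h ψ t p z +
      (-fderiv ℝ h ((-(1 - t)⁻¹) • (z - p.2))) k + K / (1 - t) * ‖k‖ ^ 2 := by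
  have ht' : 0 < 1 - t := sub_pos.2 ht
  have := mul_le_mul_of_nonneg_left
    (hh.upper ((-(1 - t)⁻¹) • (z - p.2)) ((-(1 - t)⁻¹) • k)) ht'.le
  rw [← smul_add, norm_smul, map_smul, sub_add_eq_add_sub, norm_neg, norm_inv,
    Real.norm_of_nonneg ht'.le, smul_eq_mul, mul_add, mul_add, neg_mul, mul_neg,
    mul_inv_cancel_left₀ ht'.ne',
    show (1 - t) * (K * ((1 - t)⁻¹ * ‖k‖) ^ 2) = K / (1 - t) * ‖k‖ ^ 2 by field_simp] at this
  rw [upperBarrier, upperBarrier, neg_apply]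
  linarith

theorem hasFDerivAt_comp_smul_sub (c : ℝ) (x z : E) :
    HasFDerivAt (fun z => h (c • (z - x))) (c • fderiv ℝ h (c • (z - x))) z := by
  have hc : HasFDerivAt (fun z : E => c • (z - x)) (c • ContinuousLinearMap.id ℝ E) z :=
    ((hasFDerivAt_id z).sub_const x).const_smul c
  refine ((hh.differentiable (c • (z - x))).hasFDerivAt.comp z hc).congr_fderiv ?_
  ext k
  simp

theorem hasFDerivAt_fderiv_comp_smul_sub (c : ℝ) (x z : E) :
    HasFDerivAt (fun z => -fderiv ℝ h (c • (z - x)))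
      (-(c • fderiv ℝ (fderiv ℝ h) (c • (z - x)))) z := by
  have hc : HasFDerivAt (fun z : E => c • (z - x)) (c • ContinuousLinearMap.id ℝ E) z :=
    ((hasFDerivAt_id z).sub_const x).const_smul c
  refine ((hh.hasFDerivAt_fderiv (c • (z - x))).comp z hc).neg.congr_fderiv ?_
  ext k
  simp

theorem hasFDerivAt_lowerBarrier (ht : t ≠ 0) (φ : E → ℝ) (p : E × E) (z : E) :
    HasFDerivAt (lowerBarrier h φ t p) (-fderiv ℝ h (t⁻¹ • (z - p.1))) z := by
  refine (((hh.hasFDerivAt_comp_smul_sub t⁻¹ p.1 z).const_mul t).const_sub (φ p.1)).congr_fderiv ?_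
  rw [smul_inv_smul₀ ht]

theorem hasFDerivAt_upperBarrier (ht : 1 - t ≠ 0) (ψ : E → ℝ) (p : E × E) (z : E) :
    HasFDerivAt (upperBarrier h ψ t p) (-fderiv ℝ h ((-(1 - t)⁻¹) • (z - p.2))) z := by
  refine (((hh.hasFDerivAt_comp_smul_sub (-(1 - t)⁻¹) p.2 z).const_mul (1 - t)).const_add
    (-ψ p.2)).congr_fderiv ?_
  rw [neg_smul, smul_neg, smul_inv_smul₀ ht]

theorem exists_intermediate_potential [FiniteDimensional ℝ E] (ht0 : 0 < t) (ht1 : t < 1)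
    {φ ψ : E → ℝ} {Γ : Set (E × E)}
    (hΓ : IsContactSet (fun p => h (p.2 - p.1)) φ ψ Γ) (hne : Γ.Nonempty) :
    ∃ (u : E → ℝ) (u' : E → E →L[ℝ] ℝ) (C : NNReal),
      (∀ p ∈ Γ, ∀ z, lowerBarrier h φ t p z ≤ u z) ∧
      (∀ p ∈ Γ, ∀ z, u z ≤ upperBarrier h ψ t p z) ∧
      (∀ z, HasFDerivAt u (u' z) z) ∧ LipschitzWith C u' := by
  have hK : 0 < K := hh.pos.trans_le hh.le
  have : 0 < 1 - t := sub_pos.2 ht1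
  let κ : NNReal := Real.toNNReal (K / t + K / (1 - t))
  have hκ : (κ : ℝ) = K / t + K / (1 - t) := Real.coe_toNNReal _ (by positivity)
  have hκ_lower (k : E) : K / t * ‖k‖ ^ 2 ≤ κ * ‖k‖ ^ 2 := by
    rw [hκ]
    gcongr
    exact le_add_of_nonneg_right (by positivity)
  have hκ_upper (k : E) : K / (1 - t) * ‖k‖ ^ 2 ≤ κ * ‖k‖ ^ 2 := by
    rw [hκ]
    gcongr
    exact le_add_of_nonneg_left (by positivity)
  have := hne.to_subtype
  obtain ⟨u, u', C, hlow, hup, hu, hC⟩ := exists_C11_between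
    (l := fun p : Γ => lowerBarrier h φ t p) (r := fun p : Γ => upperBarrier h ψ t p) (κ := κ)
    (fun p z => ⟨_, fun k => (sub_le_sub_left (hκ_lower k) _).trans
      (hh.lowerBarrier_semiconvex ht0 φ p z k)⟩)
    (fun p z => ⟨_, fun k => (hh.upperBarrier_semiconcave ht1 ψ p z k).trans
      (add_le_add_right (hκ_upper k) _)⟩)
    (fun p q z => lowerBarrier_le_upperBarrier hh.convexOn hΓ ht0 ht1 p.2 q.2 z)
  exact ⟨u, u', C, fun p hp => hlow ⟨p, hp⟩, fun p hp => hup ⟨p, hp⟩, hu, hC⟩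

theorem second_fderiv_velocity_bounds (ht0 : 0 < t) (ht1 : t < 1) {φ ψ u : E → ℝ} {p : E × E}
    (hlow : ∀ z, lowerBarrier h φ t p z ≤ u z) (hup : ∀ z, u z ≤ upperBarrier h ψ t p z)
    (hcontact : lowerBarrier h φ t p (interpolate t p) = upperBarrier h ψ t p (interpolate t p))
    {V : E → E} (hu : ∀ z, HasFDerivAt u (-fderiv ℝ h (V z)) z)
    (hV : V (interpolate t p) = p.2 - p.1) {M : E →L[ℝ] E}
    (hM : HasFDerivAt V M (interpolate t p)) (k : E) :
    t * fderiv ℝ (fderiv ℝ h) (p.2 - p.1) (M k) k ≤ fderiv ℝ (fderiv ℝ h) (p.2 - p.1) k k ∧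
      -((1 - t) * fderiv ℝ (fderiv ℝ h) (p.2 - p.1) (M k) k) ≤
        fderiv ℝ (fderiv ℝ h) (p.2 - p.1) k k := by
  have ht1' : 0 < 1 - t := sub_pos.2 ht1
  set z := interpolate t p
  have hfst : t⁻¹ • (z - p.1) = p.2 - p.1 := inv_smul_interpolate_sub_fst ht0.ne' p
  have hsnd : (-(1 - t)⁻¹) • (z - p.2) = p.2 - p.1 := neg_inv_smul_interpolate_sub_snd ht1'.ne' p
  set H := fderiv ℝ (fderiv ℝ h) (p.2 - p.1)
  have hu2 : HasFDerivAt (fun z => -fderiv ℝ h (V z)) (-H.comp M) z := by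
    have := hh.hasFDerivAt_fderiv (V z)
    rw [hV] at this
    exact (HasFDerivAt.comp z (hV ▸ this) hM).neg
  constructor
  · have hlow2 := hh.hasFDerivAt_fderiv_comp_smul_sub t⁻¹ p.1 z
    rw [hfst] at hlow2
    have := nonneg_second_derivative_of_isMin
      (fun w => (hu w).sub (hh.hasFDerivAt_lowerBarrier ht0.ne' φ p w)) (hu2.sub hlow2)
      (fun w => by simp only [Pi.sub_apply]; linarith [hlow w, hup z]) k
    simp only [sub_apply, neg_apply, smul_apply, ContinuousLinearMap.comp_apply,
      smul_eq_mul] at this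
    exact (le_inv_mul_iff₀ ht0).1 (by linarith)
  · have hup2 := hh.hasFDerivAt_fderiv_comp_smul_sub (-(1 - t)⁻¹) p.2 z
    rw [hsnd] at hup2
    have := nonneg_second_derivative_of_isMin
      (fun w => (hh.hasFDerivAt_upperBarrier ht1'.ne' ψ p w).sub (hu w)) (hup2.sub hu2)
      (fun w => by simp only [Pi.sub_apply]; linarith [hlow z, hup w]) k
    simp only [sub_apply, neg_apply, smul_apply, ContinuousLinearMap.comp_apply,
      smul_eq_mul] at this
    rw [← mul_neg]
    exact (le_inv_mul_iff₀ ht1').1 (by linarith)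

theorem exists_lipschitz_velocity [FiniteDimensional ℝ E] (ht0 : 0 < t) (ht1 : t < 1)
    {φ ψ : E → ℝ} {Γ : Set (E × E)}
    (hΓ : IsContactSet (fun p => h (p.2 - p.1)) φ ψ Γ) (hne : Γ.Nonempty) {b : ℝ}
    (hb : 0 ≤ b) (hbn : b * finrank ℝ E ≤ 1) :
    ∃ (V : E → E) (C : NNReal), LipschitzWith C V ∧
      (∀ p ∈ Γ, V (interpolate t p) = p.2 - p.1) ∧
      ∀ p ∈ Γ, DifferentiableAt ℝ V (interpolate t p) →
        (1 - t) * |(ContinuousLinearMap.id ℝ E - t • fderiv ℝ V (interpolate t p)).det| ^ b +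
          t * |(ContinuousLinearMap.id ℝ E + (1 - t) • fderiv ℝ V (interpolate t p)).det| ^ b
            ≤ 1 := by
  obtain ⟨u, u', C, hlow, hup, hu, hC⟩ := hh.exists_intermediate_potential ht0 ht1 hΓ hne
  choose V hV using fun z => hh.fderiv_surjective (-u' z)
  have hu' (z : E) : u' z = -fderiv ℝ h (V z) := by rw [hV, neg_neg]
  have hcontact {p : E × E} (hp : p ∈ Γ) :=
    lowerBarrier_interpolate hΓ ht0.ne' (sub_pos.2 ht1).ne' hp
  have V_lipschitz : LipschitzWith (C / m.toNNReal) V := by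
    refine LipschitzWith.of_dist_le_mul fun z w => ?_
    have hgrad : m * ‖V z - V w‖ ≤ C * dist z w := by
      refine (hh.norm_sub_le_norm_fderiv_sub _ _).trans ?_
      simpa [hu', dist_eq_norm, neg_add_eq_sub, norm_sub_rev] using hC.dist_le_mul z w
    rwa [dist_eq_norm, NNReal.coe_div, Real.coe_toNNReal _ hh.pos.le, div_mul_eq_mul_div,
      le_div_iff₀' hh.pos]
  have V_interpolate (p) (hp : p ∈ Γ) : V (interpolate t p) = p.2 - p.1 := by
    have hmin (w : E) : u (interpolate t p) - lowerBarrier h φ t p (interpolate t p) ≤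
        u w - lowerBarrier h φ t p w := by
      linarith [hlow p hp w, hup p hp (interpolate t p), hcontact hp]
    have hcrit := IsLocalMin.hasFDerivAt_eq_zero (.of_forall hmin)
      ((hu _).sub (hh.hasFDerivAt_lowerBarrier ht0.ne' φ p _))
    rw [hu', inv_smul_interpolate_sub_fst ht0.ne', sub_eq_zero, neg_inj] at hcrit
    exact hh.fderiv_injective hcrit
  refine ⟨V, C / m.toNNReal, V_lipschitz, V_interpolate, fun p hp hdiff => ?_⟩
  have hu_V (z : E) : HasFDerivAt u (-fderiv ℝ h (V z)) z := hu' z ▸ hu z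
  have bounds := hh.second_fderiv_velocity_bounds ht0 ht1 (hlow p hp) (hup p hp) (hcontact hp)
    hu_V (V_interpolate p hp) hdiff.hasFDerivAt
  have hu2 : HasFDerivAt (fun z => -fderiv ℝ h (V z))
      (-(fderiv ℝ (fderiv ℝ h) (p.2 - p.1)).comp (fderiv ℝ V (interpolate t p)))
      (interpolate t p) :=
    (HasFDerivAt.comp _ (V_interpolate p hp ▸ hh.hasFDerivAt_fderiv _) hdiff.hasFDerivAt).neg
  exact det_rpow_interpolation_le_one
    (H := (ContinuousLinearMap.coeLM ℝ).comp (fderiv ℝ (fderiv ℝ h) (p.2 - p.1)).toLinearMap)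
    (M := (fderiv ℝ V (interpolate t p)).toLinearMap)
    (fun k l => hh.second_fderiv_symm _ k l) (fun k hk => hh.second_fderiv_pos _ hk)
    (fun k l => neg_injective (second_derivative_symmetric hu_V hu2 k l)) ht0.le ht1.le
    (fun k => (bounds k).1) (fun k => (bounds k).2) hb hbn

end IsRegularCost

end Velocity

section Mollification

open ContinuousLinearMap

variable {E : Type*} [NormedAddCommGroup E] [MeasurableSpace E] {μ : Measure E}

theorem convexOn_convolution [NormedSpace ℝ E] {f g : E → ℝ} (hf : ∀ x, 0 ≤ f x)
    (hg : ConvexOn ℝ univ g)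
    (hfg : ConvolutionExists f g (lsmul ℝ ℝ) μ) :
    ConvexOn ℝ univ (convolution f g (lsmul ℝ ℝ) μ) := by
  refine ⟨convex_univ, fun x _ y _ a b ha hb hab => ?_⟩
  have hx : Integrable (fun s => a • lsmul ℝ ℝ (f s) (g (x - s))) μ := (hfg x).integrable.smul a
  have hy : Integrable (fun s => b • lsmul ℝ ℝ (f s) (g (y - s))) μ := (hfg y).integrable.smul b
  simp only [convolution, ← integral_smul]
  rw [← integral_add hx hy]
  refine integral_mono (hfg _).integrable (hx.add hy) fun s => ?_
  have hs : a • x + b • y - s = a • (x - s) + b • (y - s) := by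
    rw [smul_sub, smul_sub, sub_add_sub_comm, ← add_smul, hab, one_smul]
  calc f s • g (a • x + b • y - s) ≤ f s • (a • g (x - s) + b • g (y - s)) := by
        rw [hs]
        exact smul_le_smul_of_nonneg_left (hg.2 (mem_univ _) (mem_univ _) ha hb hab) (hf s)
    _ = a • f s • g (x - s) + b • f s • g (y - s) := by simp only [smul_eq_mul]; ring

variable [BorelSpace E]

theorem exists_lipschitzWith_convolution {F F' : Type*} [NormedAddCommGroup F] [NormedSpace ℝ F]
    [NormedAddCommGroup F'] [NormedSpace ℝ F'] [IsFiniteMeasureOnCompacts μ]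
    {f : E → F} {g : E → ℝ} {C : NNReal} (hf : Continuous f) (hcf : HasCompactSupport f)
    (hg : LipschitzWith C g) (L : F →L[ℝ] ℝ →L[ℝ] F') :
    ∃ C', LipschitzWith C' (convolution f g L μ) := by
  have hf_int : Integrable f μ := hf.integrable_of_hasCompactSupport hcf
  have hfg (x : E) := (hcf.convolutionExists_left_of_continuous_right (μ := μ) L
    hf_int.locallyIntegrable hg.continuous x).integrable
  refine ⟨(∫ s, ‖L‖ * ‖f s‖ * C ∂μ).toNNReal, LipschitzWith.of_dist_le_mul fun x y => ?_⟩
  rw [Real.coe_toNNReal _ (by positivity), dist_eq_norm, convolution, convolution,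
    ← integral_sub (hfg x) (hfg y), ← integral_mul_const]
  refine norm_integral_le_of_norm_le (((hf_int.norm.const_mul _).mul_const _).mul_const _)
    (.of_forall fun s => ?_)
  calc ‖L (f s) (g (x - s)) - L (f s) (g (y - s))‖ ≤ ‖L‖ * ‖f s‖ * ‖g (x - s) - g (y - s)‖ := by
        rw [← map_sub]
        exact L.le_opNorm₂ _ _
    _ ≤ ‖L‖ * ‖f s‖ * (C * dist x y) := by
        gcongr
        simpa [dist_eq_norm] using hg.dist_le_mul (x - s) (y - s)
    _ = ‖L‖ * ‖f s‖ * C * dist x y := by ring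

theorem exists_smooth_convexOn_near [NormedSpace ℝ E] [FiniteDimensional ℝ E] {g : E → ℝ}
    {C : NNReal}
    (hconv : ConvexOn ℝ univ g) (hlip : LipschitzWith C g) {δ : ℝ} (hδ : 0 < δ) :
    ∃ h : E → ℝ, ContDiff ℝ 2 h ∧ ConvexOn ℝ univ h ∧ (∃ C', LipschitzWith C' (fderiv ℝ h)) ∧
      ∀ x, |h x - g x| ≤ δ := by
  let μ : Measure E := Measure.addHaar
  have hr : 0 < δ / (C + 1) := by positivity
  let φ : ContDiffBump (0 : E) := ⟨δ / (C + 1) / 2, δ / (C + 1), half_pos hr, half_lt_self hr⟩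
  have hφ : ContDiff ℝ 2 (φ.normed μ) := φ.contDiff_normed
  have hφ_int : LocallyIntegrable (φ.normed μ) μ := φ.integrable_normed.locallyIntegrable
  have hg_int : LocallyIntegrable g μ := hlip.continuous.locallyIntegrable
  have hcφ : HasCompactSupport (φ.normed μ) := φ.hasCompactSupport_normed
  refine ⟨convolution (φ.normed μ) g (lsmul ℝ ℝ) μ, hcφ.contDiff_convolution_left _ hφ hg_int,
    convexOn_convolution φ.nonneg_normed hconv
      (hcφ.convolutionExists_left_of_continuous_right _ hφ_int hlip.continuous), ?_, fun x => ?_⟩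
  · obtain ⟨C', hC'⟩ := exists_lipschitzWith_convolution (μ := μ)
      (hφ.continuous_fderiv (by norm_num)) (hcφ.fderiv ℝ) hlip ((lsmul ℝ ℝ).precompL E)
    refine ⟨C', ?_⟩
    convert hC' using 1
    ext1 x
    exact (hcφ.hasFDerivAt_convolution_left _ (hφ.of_le (by norm_num)) hg_int x).fderiv
  · refine φ.dist_normed_convolution_le (μ := μ) hlip.continuous.aestronglyMeasurable
      fun y hy => (hlip.dist_le_mul y x).trans ?_
    calc C * dist y x ≤ C * (δ / (C + 1)) := by
          gcongr
          exact (Metric.mem_ball.1 hy).le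
      _ ≤ δ := by
          rw [mul_div_left_comm]
          exact mul_le_of_le_one_right hδ.le ((div_le_one (by positivity)).2 (by linarith))

end Mollification

section TruncatedSquare

variable {E : Type*} [NormedAddCommGroup E]

/-- The squared norm, continued outside the ball of radius `R` with constant slope `2 * R`. -/
def truncatedNormSq (R : ℝ) (v : E) : ℝ := 2 * min ‖v‖ R * ‖v‖ - min ‖v‖ R ^ 2

variable {R : ℝ}

theorem truncatedNormSq_of_norm_le {v : E} (hv : ‖v‖ ≤ R) : truncatedNormSq R v = ‖v‖ ^ 2 := by
  rw [truncatedNormSq, min_eq_left hv]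
  ring

-- Equality holds for `s = min ‖v‖ R`, so `truncatedNormSq R` is a supremum of convex functions.
theorem le_truncatedNormSq {s : ℝ} (hs : s ≤ R) (v : E) :
    2 * s * ‖v‖ - s ^ 2 ≤ truncatedNormSq R v := by
  rcases le_total ‖v‖ R with hv | hv
  · rw [truncatedNormSq_of_norm_le hv]
    linarith [two_mul_le_add_sq s ‖v‖]
  · rw [truncatedNormSq, min_eq_right hv]
    nlinarith

theorem convexOn_truncatedNormSq [NormedSpace ℝ E] (hR : 0 ≤ R) :
    ConvexOn ℝ univ (truncatedNormSq R : E → ℝ) := by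
  refine ⟨convex_univ, fun x _ y _ a b ha hb hab => ?_⟩
  set s := min ‖a • x + b • y‖ R
  have : 0 ≤ s := le_min (norm_nonneg _) hR
  have hnorm : ‖a • x + b • y‖ ≤ a * ‖x‖ + b * ‖y‖ := by
    simpa [norm_smul, abs_of_nonneg, ha, hb] using norm_add_le (a • x) (b • y)
  calc 2 * s * ‖a • x + b • y‖ - s ^ 2 ≤ 2 * s * (a * ‖x‖ + b * ‖y‖) - (a + b) * s ^ 2 := by
        rw [hab, one_mul]
        gcongr
    _ = a * (2 * s * ‖x‖ - s ^ 2) + b * (2 * s * ‖y‖ - s ^ 2) := by ring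
    _ ≤ a * truncatedNormSq R x + b * truncatedNormSq R y := by
        gcongr <;> exact le_truncatedNormSq (min_le_right _ _) _

theorem lipschitzWith_truncatedNormSq (R : NNReal) :
    LipschitzWith (2 * R) (truncatedNormSq (R : ℝ) : E → ℝ) := by
  refine LipschitzWith.of_le_add_mul _ fun x y => ?_
  set s := min ‖x‖ (R : ℝ)
  have : 0 ≤ s := le_min (norm_nonneg _) R.2
  calc 2 * s * ‖x‖ - s ^ 2 ≤ 2 * s * (‖y‖ + dist x y) - s ^ 2 := by
        gcongr
        linarith [norm_sub_norm_le x y, dist_eq_norm x y]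
    _ = 2 * s * ‖y‖ - s ^ 2 + 2 * s * dist x y := by ring
    _ ≤ truncatedNormSq R y + (2 * R : NNReal) * dist x y := by
        push_cast
        gcongr
        · exact le_truncatedNormSq (min_le_right _ _) y
        · exact min_le_right _ _

end TruncatedSquare

section Approximation

variable {E : Type*} [NormedAddCommGroup E] [NormedSpace ℝ E]

theorem isRegularCost_add_bilin {h : E → ℝ} {B : E →L[ℝ] E →L[ℝ] ℝ} {C : NNReal} {ε : ℝ}
    (hsmooth : ContDiff ℝ 2 h) (hconv : ConvexOn ℝ univ h) (hlip : LipschitzWith C (fderiv ℝ h))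
    (hB : ∀ k l, B k l = B l k) (hB_ge : ∀ k, ‖k‖ ^ 2 ≤ B k k) (hε : 0 < ε) :
    IsRegularCost (fun v => h v + ε * B v v) ε (C + ε * (‖B‖ + 1)) := by
  have h_diff (v : E) := (hsmooth.differentiable (by norm_num) v).hasFDerivAt
  have h_support (v k : E) : h v + fderiv ℝ h v k ≤ h (v + k) := by
    obtain ⟨p, hp⟩ := exists_support_of_convexOn_univ hconv hsmooth.continuous v
    have hcrit := IsLocalMin.hasFDerivAt_eq_zero (a := v) (.of_forall fun w => by
      have := hp (w - v)
      rw [add_sub_cancel, map_sub] at this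
      simp only [Pi.sub_apply]
      linarith) ((h_diff v).sub p.hasFDerivAt)
    rw [sub_eq_zero.1 hcrit]
    exact hp k
  have h_above (v k : E) : h (v + k) ≤ h v + fderiv ℝ h v k + C * ‖k‖ ^ 2 := by
    have hback := h_support (v + k) (-k)
    have hdiff : (fderiv ℝ h (v + k) - fderiv ℝ h v) k ≤ C * ‖k‖ * ‖k‖ := by
      refine (le_abs_self _).trans
        (((fderiv ℝ h (v + k) - fderiv ℝ h v).le_opNorm k).trans ?_)
      gcongr
      simpa [dist_eq_norm] using hlip.dist_le_mul (v + k) v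
    rw [add_neg_cancel_right, map_neg] at hback
    rw [sub_apply] at hdiff
    linarith
  have hfderiv (v : E) : fderiv ℝ (fun v => h v + ε * B v v) v =
      fderiv ℝ h v + ε • (2 : ℝ) • B v :=
    ((h_diff v).add ((hasFDerivAt_bilin_self hB v).const_mul ε)).fderiv
  have B_add (v k : E) : B (v + k) (v + k) = B v v + 2 * B v k + B k k := by
    simp only [map_add, add_apply, hB k v]
    ring
  have B_le (k : E) : B k k ≤ (‖B‖ + 1) * ‖k‖ ^ 2 := by
    have := (le_abs_self _).trans (B.le_opNorm₂ k k)
    linarith [sq_nonneg ‖k‖]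
  refine ⟨hε, by nlinarith [C.2, mul_nonneg hε.le (norm_nonneg B)], by fun_prop,
    fun v k => ?_, fun v k => ?_⟩ <;>
  · simp only [hfderiv, add_apply, smul_apply, smul_eq_mul, B_add]
    linarith [h_support v k, h_above v k, mul_le_mul_of_nonneg_left (hB_ge k) hε.le,
      mul_le_mul_of_nonneg_left (B_le k) hε.le]

theorem exists_isRegularCost_near_norm_sq [FiniteDimensional ℝ E] [MeasurableSpace E]
    [BorelSpace E] (R : NNReal) {δ : ℝ} (hδ : 0 < δ) :
    ∃ (h : E → ℝ) (m K : ℝ), IsRegularCost h m K ∧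
      ∀ v, ‖v‖ ≤ R → |h v - ‖v‖ ^ 2| ≤ δ := by
  obtain ⟨B, hB, hB_ge⟩ := exists_symm_bilin_ge_norm_sq E
  obtain ⟨h, hsmooth, hconv, ⟨C, hlip⟩, hnear⟩ := exists_smooth_convexOn_near
    (convexOn_truncatedNormSq R.2) (lipschitzWith_truncatedNormSq (E := E) R) (half_pos hδ)
  let ε : ℝ := δ / 2 / (‖B‖ * R ^ 2 + 1)
  have hε : 0 < ε := by positivity
  refine ⟨_, _, _, isRegularCost_add_bilin hsmooth hconv hlip hB hB_ge hε, fun v hv => ?_⟩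
  have hεB : |ε * B v v| ≤ δ / 2 := by
    rw [abs_mul, abs_of_pos hε]
    calc ε * |B v v| ≤ ε * (‖B‖ * R ^ 2 + 1) := by
          have : ‖B‖ * ‖v‖ * ‖v‖ ≤ ‖B‖ * R ^ 2 := by
            rw [sq, mul_assoc]
            gcongr
          gcongr
          exact (B.le_opNorm₂ v v).trans (by linarith)
      _ = δ / 2 := div_mul_cancel₀ _ (by positivity)
  calc |h v + ε * B v v - ‖v‖ ^ 2| = |(h v - truncatedNormSq R v) + ε * B v v| := by
        rw [truncatedNormSq_of_norm_le hv]
        congr 1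
        ring
    _ ≤ δ / 2 + δ / 2 := (abs_add_le _ _).trans (add_le_add (hnear v) hεB)
    _ = δ := add_halves δ

end Approximation

section Duality

theorem exists_linearMap_le_sublinear_eq {V : Type*} [AddCommGroup V] [Module ℝ V] {N : V → ℝ}
    (N_smul : ∀ c : ℝ, 0 < c → ∀ x, N (c • x) = c * N x)
    (N_add : ∀ x y, N (x + y) ≤ N x + N y) (x : V) :
    ∃ L : V →ₗ[ℝ] ℝ, L x = N x ∧ ∀ y, L y ≤ N y := by
  have N_zero : N 0 = 0 := by
    have := N_smul 2 two_pos 0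
    rw [smul_zero] at this
    linarith
  have hspan (c : ℝ) (hc : c • x = 0) : RingHom.id ℝ c • N x = 0 := by
    rcases smul_eq_zero.1 hc with rfl | rfl <;> simp [N_zero]
  obtain ⟨L, hL_eq, hL_le⟩ := exists_extension_of_le_sublinear
    (LinearPMap.mkSpanSingleton' x (N x) hspan) N N_smul N_add (by
      rintro ⟨y, hy⟩
      obtain ⟨r, rfl⟩ := Submodule.mem_span_singleton.1 hy
      rw [LinearPMap.mkSpanSingleton'_apply, RingHom.id_apply, smul_eq_mul]
      rcases lt_trichotomy r 0 with hr | rfl | hr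
      · have := N_add (r • x) ((-r) • x)
        rw [← add_smul, add_neg_cancel, zero_smul, N_zero, N_smul _ (neg_pos.2 hr)] at this
        linarith
      · simp [N_zero]
      · exact (N_smul r hr x).ge)
  exact ⟨L, (hL_eq ⟨x, Submodule.mem_span_singleton_self x⟩).trans
    (LinearPMap.mkSpanSingleton'_apply_self x (N x) hspan _), hL_le⟩

theorem exists_isProbabilityMeasure_integral_eq {Z : Type*} [TopologicalSpace Z] [T2Space Z]
    [CompactSpace Z] [MeasurableSpace Z] [BorelSpace Z] (L : C(Z, ℝ) →ₗ[ℝ] ℝ)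
    (L_nonneg : ∀ f : C(Z, ℝ), (∀ z, 0 ≤ f z) → 0 ≤ L f) (L_one : L 1 = 1) :
    ∃ π : Measure Z, IsProbabilityMeasure π ∧ ∀ f : C(Z, ℝ), ∫ z, f z ∂π = L f := by
  let Λ : CompactlySupportedContinuousMap Z ℝ →ₚ[ℝ] ℝ := PositiveLinearMap.mk₀
    { toFun := fun f => L f.toContinuousMap
      map_add' := fun f g => map_add L f.toContinuousMap g.toContinuousMap
      map_smul' := fun c f => map_smul L c f.toContinuousMap }
    fun f hf => L_nonneg _ fun z => hf z
  have hΛ (f : C(Z, ℝ)) : ∫ z, f z ∂(RealRMK.rieszMeasure Λ) = L f :=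
    RealRMK.integral_rieszMeasure Λ ⟨f, HasCompactSupport.of_compactSpace _⟩
  refine ⟨RealRMK.rieszMeasure Λ, ⟨?_⟩, hΛ⟩
  have hmass := (hΛ 1).trans L_one
  simp only [ContinuousMap.one_apply, integral_const, smul_eq_mul, mul_one] at hmass
  rwa [measureReal_def, ENNReal.toReal_eq_one_iff] at hmass

/-- The couplings (transport plans) of `μ` and `ν`. -/
def transportPlans {X Y : Type*} [MeasurableSpace X] [MeasurableSpace Y] (μ : Measure X)
    (ν : Measure Y) : Set (Measure (X × Y)) :=
  {γ | IsProbabilityMeasure γ ∧ γ.map Prod.fst = μ ∧ γ.map Prod.snd = ν}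

theorem integrable_continuousMap {Z : Type*} [TopologicalSpace Z] [CompactSpace Z]
    [MeasurableSpace Z] [OpensMeasurableSpace Z] (μ : Measure Z) [IsFiniteMeasure μ]
    (f : C(Z, ℝ)) : Integrable f μ :=
  BoundedContinuousFunction.integrable μ (BoundedContinuousFunction.mkOfCompact f)

variable {X Y : Type*} [MetricSpace X] [MeasurableSpace X] [MetricSpace Y] [MeasurableSpace Y]
  {μ : Measure X} {ν : Measure Y}

/-- The values attained by the Kantorovich dual problem for the reward `f`: the total integrals of
pairs of potentials whose sum dominates `f`. -/
def dualValues (μ : Measure X) (ν : Measure Y) (f : C(X × Y, ℝ)) : Set ℝ :=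
  {r | ∃ (φ : C(X, ℝ)) (ψ : C(Y, ℝ)), (∀ x y, f (x, y) ≤ φ x + ψ y) ∧
    ∫ x, φ x ∂μ + ∫ y, ψ y ∂ν = r}

theorem smul_mem_dualValues {f : C(X × Y, ℝ)} {r c : ℝ} (hc : 0 ≤ c)
    (hr : r ∈ dualValues μ ν f) : c • r ∈ dualValues μ ν (c • f) := by
  obtain ⟨φ, ψ, hf, rfl⟩ := hr
  refine ⟨c • φ, c • ψ, fun x y => ?_, ?_⟩
  · simpa [mul_add] using mul_le_mul_of_nonneg_left (hf x y) hc
  · simp [integral_const_mul, mul_add]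

theorem sInf_dualValues_smul {c : ℝ} (hc : 0 < c) (f : C(X × Y, ℝ)) :
    sInf (dualValues μ ν (c • f)) = c * sInf (dualValues μ ν f) := by
  rw [← smul_eq_mul, ← Real.sInf_smul_of_nonneg hc.le]
  congr 1
  ext r
  rw [mem_smul_set_iff_inv_smul_mem₀ hc.ne']
  refine ⟨fun hr => ?_, fun hr => ?_⟩
  · simpa only [inv_smul_smul₀ hc.ne'] using smul_mem_dualValues (inv_nonneg.2 hc.le) hr
  · simpa only [smul_inv_smul₀ hc.ne'] using smul_mem_dualValues hc.le hr

variable [CompactSpace X] [CompactSpace Y]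

theorem dualValues_nonempty (f : C(X × Y, ℝ)) : (dualValues μ ν f).Nonempty :=
  ⟨_, .const X ‖f‖, 0, fun x y => by simpa using f.apply_le_norm (x, y), rfl⟩

variable [BorelSpace X] [BorelSpace Y]

theorem integral_potentials_of_mem_transportPlans {γ : Measure (X × Y)}
    (hγ : γ ∈ transportPlans μ ν) (φ : C(X, ℝ)) (ψ : C(Y, ℝ)) :
    ∫ p, (φ p.1 + ψ p.2) ∂γ = ∫ x, φ x ∂μ + ∫ y, ψ y ∂ν := by
  obtain ⟨hγ_prob, rfl, rfl⟩ := hγ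
  rw [integral_map measurable_fst.aemeasurable (by fun_prop),
    integral_map measurable_snd.aemeasurable (by fun_prop)]
  exact integral_add (integrable_continuousMap γ (φ.comp .fst))
    (integrable_continuousMap γ (ψ.comp .snd))

theorem integral_le_of_mem_dualValues {f : C(X × Y, ℝ)} {r : ℝ} (hr : r ∈ dualValues μ ν f)
    {γ : Measure (X × Y)} (hγ : γ ∈ transportPlans μ ν) : ∫ p, f p ∂γ ≤ r := by
  obtain ⟨φ, ψ, hf, rfl⟩ := hr
  have := hγ.1
  rw [← integral_potentials_of_mem_transportPlans hγ]
  exact integral_mono (integrable_continuousMap γ f)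
    (integrable_continuousMap γ (φ.comp .fst + ψ.comp .snd)) fun p => hf p.1 p.2

theorem ae_tendsto_zero_of_integral_le {Z : Type*} [MeasurableSpace Z] {π : Measure Z}
    {g : ℕ → Z → ℝ} {u : ℕ → ℝ} (hg : ∀ n, Integrable (g n) π) (hg0 : ∀ n z, 0 ≤ g n z)
    (hgu : ∀ n, ∫ z, g n z ∂π ≤ u n) (hu : Summable u) :
    ∀ᵐ z ∂π, Tendsto (fun n => g n z) atTop (𝓝 0) := by
  have hnorm (n : ℕ) : eLpNorm (g n) 1 π ≤ ENNReal.ofReal (u n) := by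
    rw [eLpNorm_one_eq_lintegral_enorm, lintegral_congr fun z => Real.enorm_of_nonneg (hg0 n z),
      ← ofReal_integral_eq_lintegral_ofReal (hg n) (ae_of_all _ (hg0 n))]
    exact ENNReal.ofReal_le_ofReal (hgu n)
  have hsum : ∑' n, eLpNorm (g n) 1 π ≠ ∞ :=
    ne_top_of_le_ne_top hu.tsum_ofReal_ne_top (ENNReal.tsum_le_tsum hnorm)
  filter_upwards [summable_norm_of_tsum_eLpNorm_ne_top le_rfl (fun n => (hg n).1) hsum] with z hz
  exact (summable_norm_iff.1 hz).tendsto_atTop_zero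

theorem exists_tendsto_hyperfilter_of_eventually_abs_le {u : ℕ → ℝ} {M : ℝ}
    (hu : ∀ᶠ n in atTop, |u n| ≤ M) : ∃ l, Tendsto u (hyperfilter ℕ) (𝓝 l) := by
  obtain ⟨l, -, hl⟩ := (isCompact_Icc (a := -M) (b := M)).ultrafilter_le_nhds
    ((hyperfilter ℕ).map u) (by
      rw [Ultrafilter.coe_map, le_principal_iff, mem_map]
      exact (hu.mono fun n => abs_le.1).filter_mono Nat.hyperfilter_le_atTop)
  exact ⟨l, hl⟩

-- The potentials need not converge, but along an ultrafilter they do at every point of `Γ`, once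
-- normalized to vanish at a reference point.
theorem exists_isContactSet_of_tendsto {X Y : Type*} {f : X × Y → ℝ} {M : ℝ}
    (hf : ∀ p, |f p| ≤ M) {φ : ℕ → X → ℝ} {ψ : ℕ → Y → ℝ}
    (hle : ∀ n x y, φ n x + ψ n y ≤ f (x, y)) :
    ∃ φ' ψ', IsContactSet f φ' ψ'
      {p | Tendsto (fun n => φ n p.1 + ψ n p.2) atTop (𝓝 (f p))} := by
  set Γ := {p | Tendsto (fun n => φ n p.1 + ψ n p.2) atTop (𝓝 (f p))}
  rcases Γ.eq_empty_or_nonempty with hΓ | ⟨p₀, hp₀⟩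
  · exact ⟨0, 0, by simp [hΓ], by simp [hΓ]⟩
  have near_f {p : X × Y} (hp : p ∈ Γ) : ∀ᶠ n in atTop, f p - 1 < φ n p.1 + ψ n p.2 :=
    hp.eventually (lt_mem_nhds (sub_one_lt _))
  have hφ {p : X × Y} (hp : p ∈ Γ) :
      ∃ l, Tendsto (fun n => φ n p.1 - φ n p₀.1) (hyperfilter ℕ) (𝓝 l) := by
    refine exists_tendsto_hyperfilter_of_eventually_abs_le (M := 2 * M + 1) ?_
    filter_upwards [near_f hp, near_f hp₀] with n hn hn₀
    rw [abs_le]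
    constructor <;>
      linarith [hle n p₀.1 p.2, hle n p.1 p₀.2, abs_le.1 (hf p), abs_le.1 (hf p₀),
        abs_le.1 (hf (p₀.1, p.2)), abs_le.1 (hf (p.1, p₀.2))]
  have hψ {p : X × Y} (hp : p ∈ Γ) {l : ℝ}
      (hl : Tendsto (fun n => φ n p.1 - φ n p₀.1) (hyperfilter ℕ) (𝓝 l)) :
      Tendsto (fun n => ψ n p.2 + φ n p₀.1) (hyperfilter ℕ) (𝓝 (f p - l)) :=
    ((hp.mono_left Nat.hyperfilter_le_atTop).sub hl).congr fun n => by ring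
  refine ⟨fun x => limUnder (hyperfilter ℕ : Filter ℕ) fun n => φ n x - φ n p₀.1,
    fun y => limUnder (hyperfilter ℕ : Filter ℕ) fun n => ψ n y + φ n p₀.1,
    fun p hp q hq => ?_, fun p hp => ?_⟩
  · have hφ_lim := tendsto_nhds_limUnder (hφ hp)
    have hψ_lim := tendsto_nhds_limUnder ⟨_, hψ hq (hφ hq).choose_spec⟩
    exact le_of_tendsto (hφ_lim.add hψ_lim) (.of_forall fun n => by linarith [hle n p.1 q.2])
  · have hφ_lim := tendsto_nhds_limUnder (hφ hp)
    rw [(hψ hp hφ_lim).limUnder_eq]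
    ring

theorem exists_contact_of_integral_eq_sInf_dualValues {c : C(X × Y, ℝ)} {π : Measure (X × Y)}
    (hπ : π ∈ transportPlans μ ν) (hπc : ∫ p, (-c) p ∂π = sInf (dualValues μ ν (-c))) :
    ∃ (Γ : Set (X × Y)) (φ : X → ℝ) (ψ : Y → ℝ), (∀ᵐ p ∂π, p ∈ Γ) ∧ IsContactSet c φ ψ Γ := by
  have := hπ.1
  have hdual (n : ℕ) := Real.lt_sInf_add_pos (dualValues_nonempty (μ := μ) (ν := ν) (-c))
    (ε := (1 / 2) ^ n) (by positivity)
  choose r hr hr_lt using hdual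
  choose φ ψ hφψ hφψ_int using hr
  let gap (n : ℕ) : C(X × Y, ℝ) := (φ n).comp .fst + (ψ n).comp .snd + c
  have gap_nonneg (n : ℕ) (p : X × Y) : 0 ≤ gap n p := by
    have := hφψ n p.1 p.2
    simp only [ContinuousMap.neg_apply] at this
    simp only [gap, ContinuousMap.add_apply, ContinuousMap.comp_apply, ContinuousMap.fst_apply,
      ContinuousMap.snd_apply]
    linarith
  have gap_integral (n : ℕ) : ∫ p, gap n p ∂π ≤ (1 / 2) ^ n := by
    have hsplit : ∫ p, gap n p ∂π = ∫ p, (φ n p.1 + ψ n p.2) ∂π + ∫ p, c p ∂π :=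
      integral_add (integrable_continuousMap π ((φ n).comp .fst + (ψ n).comp .snd))
        (integrable_continuousMap π c)
    simp only [ContinuousMap.neg_apply, integral_neg] at hπc
    rw [hsplit, integral_potentials_of_mem_transportPlans hπ, hφψ_int]
    linarith [hr_lt n]
  have hgap := ae_tendsto_zero_of_integral_le (fun n => integrable_continuousMap π (gap n))
    gap_nonneg gap_integral summable_geometric_two
  obtain ⟨φ', ψ', hcontact⟩ := exists_isContactSet_of_tendsto
    (φ := fun n x => -φ n x) (ψ := fun n y => -ψ n y) (fun p => c.norm_coe_le_norm p)
    fun n x y => by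
      have := hφψ n x y
      simp only [ContinuousMap.neg_apply] at this
      linarith
  refine ⟨_, φ', ψ', ?_, hcontact⟩
  filter_upwards [hgap] with p hp
  have := hp.const_sub (c p)
  rw [sub_zero] at this
  refine this.congr fun n => ?_
  simp [gap]
  ring

variable [IsProbabilityMeasure μ] [IsProbabilityMeasure ν]

theorem add_mem_dualValues {f g : C(X × Y, ℝ)} {r s : ℝ} (hr : r ∈ dualValues μ ν f)
    (hs : s ∈ dualValues μ ν g) : r + s ∈ dualValues μ ν (f + g) := by
  obtain ⟨φ, ψ, hf, rfl⟩ := hr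
  obtain ⟨φ', ψ', hg, rfl⟩ := hs
  refine ⟨φ + φ', ψ + ψ', fun x y => ?_, ?_⟩
  · simpa [add_add_add_comm] using add_le_add (hf x y) (hg x y)
  · simp only [ContinuousMap.add_apply]
    rw [integral_add (integrable_continuousMap μ φ) (integrable_continuousMap μ φ'),
      integral_add (integrable_continuousMap ν ψ) (integrable_continuousMap ν ψ')]
    ring

theorem bddBelow_dualValues (f : C(X × Y, ℝ)) : BddBelow (dualValues μ ν f) :=
  ⟨_, fun _ hr => integral_le_of_mem_dualValues hr
    (γ := μ.prod ν) ⟨inferInstance, Measure.fst_prod, Measure.snd_prod⟩⟩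

theorem sInf_dualValues_add_le (f g : C(X × Y, ℝ)) :
    sInf (dualValues μ ν (f + g)) ≤ sInf (dualValues μ ν f) + sInf (dualValues μ ν g) := by
  rw [← csInf_add (dualValues_nonempty f) (bddBelow_dualValues f) (dualValues_nonempty g)
    (bddBelow_dualValues g)]
  refine csInf_le_csInf (bddBelow_dualValues _)
    ((dualValues_nonempty f).add (dualValues_nonempty g)) ?_
  rintro _ ⟨r, hr, s, hs, rfl⟩
  exact add_mem_dualValues hr hs

-- Hahn–Banach supports the sublinear functional `f ↦ sInf (dualValues μ ν f)` at `f` by a positive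
-- linear functional, which the Riesz theorem represents by a plan.
theorem exists_mem_transportPlans_integral_eq_sInf_dualValues (f : C(X × Y, ℝ)) :
    ∃ π ∈ transportPlans μ ν, ∫ p, f p ∂π = sInf (dualValues μ ν f) := by
  obtain ⟨L, hLf, hL_le⟩ := exists_linearMap_le_sublinear_eq
    (N := fun f => sInf (dualValues μ ν f)) (fun c hc f => sInf_dualValues_smul hc f)
    sInf_dualValues_add_le f
  have L_potentials_le (φ : C(X, ℝ)) (ψ : C(Y, ℝ)) :
      L (φ.comp .fst + ψ.comp .snd) ≤ ∫ x, φ x ∂μ + ∫ y, ψ y ∂ν :=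
    (hL_le _).trans (csInf_le (bddBelow_dualValues _) ⟨φ, ψ, fun x y => by simp, rfl⟩)
  have L_potentials (φ : C(X, ℝ)) (ψ : C(Y, ℝ)) :
      L (φ.comp .fst + ψ.comp .snd) = ∫ x, φ x ∂μ + ∫ y, ψ y ∂ν := by
    refine (L_potentials_le φ ψ).antisymm ?_
    have hneg := L_potentials_le (-φ) (-ψ)
    rw [show (-φ).comp .fst + (-ψ).comp .snd =
      -(φ.comp (.fst : C(X × Y, X)) + ψ.comp .snd) by ext p; simp [add_comm], map_neg] at hneg
    simp only [ContinuousMap.neg_apply, integral_neg] at hneg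
    linarith
  obtain ⟨π, hπ, hπL⟩ := exists_isProbabilityMeasure_integral_eq L
    (fun g hg => by
      have := (hL_le (-g)).trans (csInf_le (bddBelow_dualValues _)
        ⟨0, 0, fun x y => by simpa using hg (x, y), rfl⟩)
      simpa using this)
    (by
      have := L_potentials 1 0
      rw [show ((1 : C(X, ℝ)).comp .fst + (0 : C(Y, ℝ)).comp .snd) = (1 : C(X × Y, ℝ)) by
        ext; simp] at this
      simpa using this)
  refine ⟨π, ⟨hπ, ?_, ?_⟩, (hπL f).trans hLf⟩
  · have := Measure.isProbabilityMeasure_map (μ := π) (f := Prod.fst) measurable_fst.aemeasurable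
    refine ext_of_forall_integral_eq_of_IsFiniteMeasure fun φ => ?_
    rw [integral_map measurable_fst.aemeasurable (by fun_prop)]
    simpa using (hπL _).trans (L_potentials φ.toContinuousMap 0)
  · have := Measure.isProbabilityMeasure_map (μ := π) (f := Prod.snd) measurable_snd.aemeasurable
    refine ext_of_forall_integral_eq_of_IsFiniteMeasure fun ψ => ?_
    rw [integral_map measurable_snd.aemeasurable (by fun_prop)]
    simpa using (hπL _).trans (L_potentials 0 ψ.toContinuousMap)

end Duality

section CompactSupport

theorem transportPlans_image {X Y X' Y' : Type*} [MeasurableSpace X] [MeasurableSpace Y]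
    [MeasurableSpace X'] [MeasurableSpace Y'] {μ : Measure X} {ν : Measure Y} {f : X → X'}
    {g : Y → Y'} (hf : Measurable f) (hg : Measurable g) {γ : Measure (X × Y)}
    (hγ : γ ∈ transportPlans μ ν) :
    γ.map (Prod.map f g) ∈ transportPlans (μ.map f) (ν.map g) := by
  obtain ⟨hγ_prob, rfl, rfl⟩ := hγ
  refine ⟨Measure.isProbabilityMeasure_map (hf.prodMap hg).aemeasurable, ?_, ?_⟩
  · rw [Measure.map_map measurable_fst (hf.prodMap hg), Measure.map_map hf measurable_fst,
      Prod.map_fst']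
  · rw [Measure.map_map measurable_snd (hf.prodMap hg), Measure.map_map hg measurable_snd,
      Prod.map_snd']

theorem map_comap_eq_self_of_ae_mem_range {X Y : Type*} [MeasurableSpace X] [MeasurableSpace Y]
    {f : X → Y} (hf : MeasurableEmbedding f) {μ : Measure Y} (hμ : ∀ᵐ y ∂μ, y ∈ range f) :
    (μ.comap f).map f = μ := by
  rw [hf.map_comap, Measure.restrict_eq_self_of_ae_mem hμ]

theorem isProbabilityMeasure_comap_of_ae_mem_range {X Y : Type*} [MeasurableSpace X]
    [MeasurableSpace Y] {f : X → Y} (hf : MeasurableEmbedding f) {μ : Measure Y}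
    [IsProbabilityMeasure μ] (hμ : ∀ᵐ y ∂μ, y ∈ range f) : IsProbabilityMeasure (μ.comap f) := by
  refine ⟨?_⟩
  rw [← preimage_univ (f := f), ← hf.map_apply, map_comap_eq_self_of_ae_mem_range hf hμ,
    measure_univ]

variable {X Y : Type*} [MeasurableSpace X] [MeasurableSpace Y] {μ : Measure X} {ν : Measure Y}

theorem ae_fst_of_mem_transportPlans {γ : Measure (X × Y)} (hγ : γ ∈ transportPlans μ ν)
    {P : X → Prop} (hP : ∀ᵐ x ∂μ, P x) : ∀ᵐ p ∂γ, P p.1 := by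
  rw [← hγ.2.1] at hP
  exact ae_of_ae_map measurable_fst.aemeasurable hP

theorem ae_snd_of_mem_transportPlans {γ : Measure (X × Y)} (hγ : γ ∈ transportPlans μ ν)
    {P : Y → Prop} (hP : ∀ᵐ y ∂ν, P y) : ∀ᵐ p ∂γ, P p.2 := by
  rw [← hγ.2.2] at hP
  exact ae_of_ae_map measurable_snd.aemeasurable hP

theorem exists_mem_transportPlans_map_eq {X' Y' : Type*} [MeasurableSpace X'] [MeasurableSpace Y']
    {f : X' → X} {g : Y' → Y} (hf : MeasurableEmbedding f) (hg : MeasurableEmbedding g)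
    (hμ : ∀ᵐ x ∂μ, x ∈ range f) (hν : ∀ᵐ y ∂ν, y ∈ range g) {γ : Measure (X × Y)}
    (hγ : γ ∈ transportPlans μ ν) :
    ∃ γ' ∈ transportPlans (μ.comap f) (ν.comap g), γ'.map (Prod.map f g) = γ := by
  have hfg := hf.prodMap hg
  have hγ_range : ∀ᵐ p ∂γ, p ∈ range (Prod.map f g) := by
    filter_upwards [ae_fst_of_mem_transportPlans hγ hμ, ae_snd_of_mem_transportPlans hγ hν]
      with p hp1 hp2
    rw [range_prodMap]
    exact ⟨hp1, hp2⟩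
  have hγ_map := map_comap_eq_self_of_ae_mem_range hfg hγ_range
  have := hγ.1
  refine ⟨γ.comap (Prod.map f g),
    ⟨isProbabilityMeasure_comap_of_ae_mem_range hfg hγ_range, ?_, ?_⟩, hγ_map⟩
  · rw [← hf.comap_map ((γ.comap (Prod.map f g)).map Prod.fst),
      Measure.map_map hf.measurable measurable_fst, ← Prod.map_fst' f g,
      ← Measure.map_map measurable_fst hfg.measurable, hγ_map, hγ.2.1]
  · rw [← hg.comap_map ((γ.comap (Prod.map f g)).map Prod.snd),
      Measure.map_map hg.measurable measurable_snd, ← Prod.map_snd' f g,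
      ← Measure.map_map measurable_snd hfg.measurable, hγ_map, hγ.2.2]

theorem IsContactSet.image {X Y X' Y' : Type*} {f : X → X'} {g : Y → Y'}
    (hf : Function.Injective f) (hg : Function.Injective g) {c : X' × Y' → ℝ} {φ : X → ℝ}
    {ψ : Y → ℝ} {Γ : Set (X × Y)} (hΓ : IsContactSet (fun p => c (Prod.map f g p)) φ ψ Γ) :
    IsContactSet c (f.extend φ 0) (g.extend ψ 0) (Prod.map f g '' Γ) where
  le := by
    rintro _ ⟨p, hp, rfl⟩ _ ⟨q, hq, rfl⟩
    simpa only [Prod.map_fst, Prod.map_snd, Prod.map_apply, hf.extend_apply, hg.extend_apply]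
      using hΓ.le p hp q hq
  eq := by
    rintro _ ⟨p, hp, rfl⟩
    simpa only [Prod.map_fst, Prod.map_snd, hf.extend_apply, hg.extend_apply] using hΓ.eq p hp

theorem exists_optimal_transportPlan_and_contact {X Y : Type*} [MetricSpace X] [MeasurableSpace X]
    [BorelSpace X] [MetricSpace Y] [MeasurableSpace Y] [BorelSpace Y] {μ : Measure X}
    {ν : Measure Y} [IsProbabilityMeasure μ] [IsProbabilityMeasure ν] {K : Set X} {L : Set Y}
    (hK : IsCompact K) (hL : IsCompact L) (hμK : ∀ᵐ x ∂μ, x ∈ K) (hνL : ∀ᵐ y ∂ν, y ∈ L)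
    {c : X × Y → ℝ} (hc : Continuous c) :
    ∃ π ∈ transportPlans μ ν, (∀ γ ∈ transportPlans μ ν, ∫ p, c p ∂π ≤ ∫ p, c p ∂γ) ∧
      ∃ (Γ : Set (X × Y)) (φ : X → ℝ) (ψ : Y → ℝ), (∀ᵐ p ∂π, p ∈ Γ) ∧ IsContactSet c φ ψ Γ := by
  have := isCompact_iff_compactSpace.1 hK
  have := isCompact_iff_compactSpace.1 hL
  have hf := MeasurableEmbedding.subtype_coe hK.measurableSet
  have hg := MeasurableEmbedding.subtype_coe hL.measurableSet
  have hμ : ∀ᵐ x ∂μ, x ∈ range ((↑) : K → X) := by rwa [Subtype.range_coe]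
  have hν : ∀ᵐ y ∂ν, y ∈ range ((↑) : L → Y) := by rwa [Subtype.range_coe]
  have := isProbabilityMeasure_comap_of_ae_mem_range hf hμ
  have := isProbabilityMeasure_comap_of_ae_mem_range hg hν
  let c' : C(K × L, ℝ) := ⟨fun p => c (Prod.map (↑) (↑) p), by fun_prop⟩
  obtain ⟨π, hπ, hπc⟩ := exists_mem_transportPlans_integral_eq_sInf_dualValues
    (μ := μ.comap ((↑) : K → X)) (ν := ν.comap ((↑) : L → Y)) (-c')
  obtain ⟨Γ, φ, ψ, hπΓ, hΓ⟩ := exists_contact_of_integral_eq_sInf_dualValues hπ hπc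
  have hπ_map := transportPlans_image hf.measurable hg.measurable hπ
  rw [map_comap_eq_self_of_ae_mem_range hf hμ, map_comap_eq_self_of_ae_mem_range hg hν] at hπ_map
  refine ⟨_, hπ_map, fun γ hγ => ?_, _, _, _, ?_,
    IsContactSet.image Subtype.val_injective Subtype.val_injective hΓ⟩
  · obtain ⟨γ', hγ', rfl⟩ := exists_mem_transportPlans_map_eq hf hg hμ hν hγ
    rw [(hf.prodMap hg).integral_map, (hf.prodMap hg).integral_map]
    have := le_csInf (dualValues_nonempty (-c'))
      fun r hr => integral_le_of_mem_dualValues hr hγ'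
    rw [← hπc] at this
    simp only [ContinuousMap.neg_apply, integral_neg, neg_le_neg_iff] at this
    exact this
  · refine (hf.prodMap hg).ae_map_iff.2 ?_
    filter_upwards [hπΓ] with p hp using mem_image_of_mem _ hp

end CompactSupport

section ChangeOfVariables

variable {E : Type*} [NormedAddCommGroup E] [NormedSpace ℝ E]

/-- The absolute value of the Jacobian determinant of `F`, as an extended nonnegative real. -/
def jacobian (F : E → E) (z : E) : ℝ≥0∞ := ENNReal.ofReal |(fderiv ℝ F z).det|

variable [MeasurableSpace E] [BorelSpace E] [FiniteDimensional ℝ E]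

theorem measurable_jacobian (F : E → E) : Measurable (jacobian F) :=
  (ContinuousLinearMap.continuous_det.measurable.comp (measurable_fderiv ℝ F)).abs.ennreal_ofReal

variable {vol : Measure E} [vol.IsAddHaarMeasure] {F : E → E} {C : NNReal}

theorem measure_image_eq_zero_of_lipschitz (hF : LipschitzWith C F) {s : Set E} (hs : vol s = 0) :
    vol (F '' s) = 0 := by
  have hs' : Measure.hausdorffMeasure (finrank ℝ E) s = 0 :=
    Measure.absolutelyContinuous_isAddHaarMeasure _ vol hs
  refine Measure.absolutelyContinuous_isAddHaarMeasure vol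
    (Measure.hausdorffMeasure (finrank ℝ E)) (le_antisymm ?_ bot_le)
  simpa [hs'] using hF.hausdorffMeasure_image_le (d := finrank ℝ E) (by positivity) s

theorem measure_image_le_lintegral_jacobian (hF : LipschitzWith C F) {s : Set E}
    (hs : MeasurableSet s) : vol (F '' s) ≤ ∫⁻ z in s, jacobian F z ∂vol := by
  set D := {z | DifferentiableAt ℝ F z}
  have hD : MeasurableSet D := measurableSet_of_differentiableAt ℝ F
  have hcover : F '' s ⊆ F '' (s ∩ D) ∪ F '' Dᶜ := by
    rw [← image_union]
    exact image_mono fun z hz => (em (z ∈ D)).imp (⟨hz, ·⟩) id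
  have hnull : vol (F '' Dᶜ) = 0 :=
    measure_image_eq_zero_of_lipschitz hF hF.ae_differentiableAt
  calc vol (F '' s) ≤ vol (F '' (s ∩ D)) + vol (F '' Dᶜ) :=
        (measure_mono hcover).trans (measure_union_le _ _)
    _ = vol (F '' (s ∩ D)) := by rw [hnull, add_zero]
    _ ≤ ∫⁻ z in s ∩ D, jacobian F z ∂vol :=
        addHaar_image_le_lintegral_abs_det_fderiv vol (hs.inter hD)
          fun z hz => hz.2.hasFDerivAt.hasFDerivWithinAt
    _ ≤ ∫⁻ z in s, jacobian F z ∂vol := lintegral_mono_set inter_subset_left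

theorem setLIntegral_image_le_lintegral_jacobian_mul (hF : LipschitzWith C F) {s : Set E}
    (hs : MeasurableSet s) {ρ : E → ℝ≥0∞} (hρ : Measurable ρ) :
    ∫⁻ y in F '' s, ρ y ∂vol ≤ ∫⁻ z in s, jacobian F z * ρ (F z) ∂vol := by
  have hF_meas := hF.continuous.measurable
  have hle : vol.restrict (F '' s) ≤ ((vol.withDensity (jacobian F)).restrict s).map F := by
    refine Measure.le_iff.2 fun B hB => ?_
    rw [Measure.restrict_apply hB, Measure.map_apply hF_meas hB,
      Measure.restrict_apply (hF_meas hB), withDensity_apply _ ((hF_meas hB).inter hs)]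
    refine (measure_mono ?_).trans (measure_image_le_lintegral_jacobian hF ((hF_meas hB).inter hs))
    rintro _ ⟨hb, z, hz, rfl⟩
    exact ⟨z, ⟨hb, hz⟩, rfl⟩
  calc ∫⁻ y in F '' s, ρ y ∂vol
      ≤ ∫⁻ y, ρ y ∂((vol.withDensity (jacobian F)).restrict s).map F := lintegral_mono' hle le_rfl
    _ = ∫⁻ z in s, ρ (F z) ∂vol.withDensity (jacobian F) := lintegral_map hρ hF_meas
    _ = ∫⁻ z in s, jacobian F z * ρ (F z) ∂vol :=
        setLIntegral_withDensity_eq_setLIntegral_mul _ (measurable_jacobian F) (hρ.comp hF_meas) hs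

section Pushforward

variable {ν : Measure E} {G : Set E} {ρ : E → ℝ≥0∞}

theorem measure_le_lintegral_jacobian_mul [IsFiniteMeasure ν] (hF : LipschitzWith C F)
    (hρ : Measurable ρ) (hFG : (ν.map F).restrict G = (vol.restrict G).withDensity ρ) {A : Set E}
    (hA : MeasurableSet A) (hAG : A ⊆ F ⁻¹' G) : ν A ≤ ∫⁻ z in A, jacobian F z * ρ (F z) ∂vol := by
  -- The image of `A` need not be measurable, whence the approximation by compact sets.
  rw [hA.measure_eq_iSup_isCompact]
  refine iSup_le fun K => iSup_le fun hKA => iSup_le fun hK => ?_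
  have hFK : MeasurableSet (F '' K) := (hK.image hF.continuous).measurableSet
  have hFKG : F '' K ⊆ G := image_subset_iff.2 (hKA.trans hAG)
  calc ν K ≤ ν (F ⁻¹' (F '' K)) := measure_mono (subset_preimage_image _ _)
    _ = (ν.map F).restrict G (F '' K) := by
        rw [Measure.restrict_apply hFK, inter_eq_left.2 hFKG,
          Measure.map_apply hF.continuous.measurable hFK]
    _ = ∫⁻ y in F '' K, ρ y ∂vol := by
        rw [hFG, withDensity_apply _ hFK, Measure.restrict_restrict hFK, inter_eq_left.2 hFKG]
    _ ≤ ∫⁻ z in K, jacobian F z * ρ (F z) ∂vol :=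
        setLIntegral_image_le_lintegral_jacobian_mul hF hK.measurableSet hρ
    _ ≤ ∫⁻ z in A, jacobian F z * ρ (F z) ∂vol := lintegral_mono_set hKA

theorem rnDeriv_le_jacobian_mul [IsFiniteMeasure ν] (hF : LipschitzWith C F)
    (hG : MeasurableSet G) (hρ : Measurable ρ)
    (hFG : (ν.map F).restrict G = (vol.restrict G).withDensity ρ) :
    ∀ᵐ z ∂vol.restrict (F ⁻¹' G), ν.rnDeriv vol z ≤ jacobian F z * ρ (F z) := by
  refine ae_le_of_forall_setLIntegral_le_of_sigmaFinite (Measure.measurable_rnDeriv ν vol)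
    fun A hA _ => ?_
  rw [Measure.restrict_restrict hA]
  exact (Measure.setLIntegral_rnDeriv_le _).trans <| measure_le_lintegral_jacobian_mul hF hρ hFG
    (hA.inter (hF.continuous.measurable hG)) inter_subset_right

theorem restrict_preimage_eq_withDensity_rnDeriv [IsFiniteMeasure ν] (hF : LipschitzWith C F)
    (hG : MeasurableSet G) (hρ : Measurable ρ)
    (hFG : (ν.map F).restrict G = (vol.restrict G).withDensity ρ) :
    ν.restrict (F ⁻¹' G) = (vol.restrict (F ⁻¹' G)).withDensity (ν.rnDeriv vol) := by
  have hFG_meas : MeasurableSet (F ⁻¹' G) := hF.continuous.measurable hG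
  have hac : ν.restrict (F ⁻¹' G) ≪ vol := by
    refine Measure.AbsolutelyContinuous.mk fun A hA hA0 => ?_
    rw [Measure.restrict_apply hA]
    refine le_antisymm ((measure_le_lintegral_jacobian_mul hF hρ hFG (hA.inter hFG_meas)
      inter_subset_right).trans_eq ?_) bot_le
    rw [Measure.restrict_eq_zero.2 (measure_mono_null inter_subset_left hA0),
      lintegral_zero_measure]
  rw [← withDensity_indicator hFG_meas, ← Measure.withDensity_rnDeriv_eq _ _ hac]
  exact withDensity_congr_ae (Measure.rnDeriv_restrict ν vol hFG_meas)

end Pushforward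

end ChangeOfVariables

section RenyiIntegral

/-- The integral of `ρ ^ (1 - b)`, where `ρ` is the density of the absolutely continuous part of
`μ`. The Rényi entropy `Ent_N` is minus this integral for `b = 1 / N`; as a Lebesgue integral it
makes sense without integrability. -/
def renyiIntegral {X : Type*} [MeasurableSpace X] (b : ℝ) (vol μ : Measure X) : ℝ≥0∞ :=
  ∫⁻ z, μ.rnDeriv vol z ^ (1 - b) ∂vol

theorem exists_restrict_eq_withDensity_rnDeriv {X : Type*} [MeasurableSpace X]
    (μ vol : Measure X) [μ.HaveLebesgueDecomposition vol] :
    ∃ G, MeasurableSet G ∧ vol Gᶜ = 0 ∧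
      μ.restrict G = (vol.restrict G).withDensity (μ.rnDeriv vol) := by
  have hs := Measure.mutuallySingular_singularPart μ vol
  refine ⟨hs.nullSet, hs.measurableSet_nullSet, hs.measure_compl_nullSet, ?_⟩
  calc μ.restrict hs.nullSet
      = (μ.singularPart vol + vol.withDensity (μ.rnDeriv vol)).restrict hs.nullSet :=
        congrArg (Measure.restrict · _) (Measure.singularPart_add_rnDeriv μ vol).symm
    _ = (vol.restrict hs.nullSet).withDensity (μ.rnDeriv vol) := by
        rw [Measure.restrict_add, hs.restrict_nullSet, zero_add,
          restrict_withDensity hs.measurableSet_nullSet]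

theorem renyiIntegral_eq_setLIntegral {X : Type*} [MeasurableSpace X] {μ vol : Measure X}
    [SigmaFinite μ] {b : ℝ} (hb : b < 1) {G : Set X} (hG : vol Gᶜ = 0)
    (hμG : μ.restrict G = (vol.restrict G).withDensity (μ.rnDeriv vol)) :
    renyiIntegral b vol μ = ∫⁻ z in G, μ.rnDeriv vol z ^ (-b) ∂μ := by
  have hρ := Measure.measurable_rnDeriv μ vol
  have hvolG : vol.restrict G = vol := Measure.restrict_eq_self_of_ae_mem hG
  rw [hμG, lintegral_withDensity_eq_lintegral_mul _ hρ (hρ.pow_const _), hvolG]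
  refine lintegral_congr_ae ?_
  filter_upwards [Measure.rnDeriv_lt_top μ vol] with z hz
  rcases eq_or_ne (μ.rnDeriv vol z) 0 with h0 | h0
  · simp [h0, hb]
  · simp only [Pi.mul_apply]
    rw [sub_eq_add_neg, ENNReal.rpow_add _ _ h0 hz.ne, ENNReal.rpow_one]

theorem rpow_neg_mul_le {σ ρ J : ℝ≥0∞} {b : ℝ} (hb : 0 < b) (hσ : σ ≠ ∞)
    (h : σ ≤ J * ρ) : ρ ^ (-b) * σ ≤ J ^ b * σ ^ (1 - b) := by
  rcases eq_or_ne σ 0 with rfl | hσ0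
  · simp
  rcases eq_or_ne ρ ∞ with rfl | hρ
  · simp [ENNReal.top_rpow_of_neg (neg_lt_zero.2 hb)]
  have hρ0 : ρ ≠ 0 := by
    rintro rfl
    exact hσ0 (by simpa using h)
  calc ρ ^ (-b) * σ = ρ ^ (-b) * (σ ^ b * σ ^ (1 - b)) := by
        rw [← ENNReal.rpow_add _ _ hσ0 hσ, add_sub_cancel, ENNReal.rpow_one]
    _ ≤ ρ ^ (-b) * ((J * ρ) ^ b * σ ^ (1 - b)) := by gcongr
    _ = (ρ ^ (-b) * ρ ^ b) * (J ^ b * σ ^ (1 - b)) := by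
        rw [ENNReal.mul_rpow_of_nonneg _ _ hb.le]
        ring
    _ = J ^ b * σ ^ (1 - b) := by
        rw [← ENNReal.rpow_add _ _ hρ0 hρ, neg_add_cancel, ENNReal.rpow_zero, one_mul]

variable {E : Type*} [NormedAddCommGroup E] [NormedSpace ℝ E] [FiniteDimensional ℝ E]
  [MeasurableSpace E] [BorelSpace E] {vol : Measure E} [vol.IsAddHaarMeasure]

theorem renyiIntegral_map_le {F : E → E} {C : NNReal} (hF : LipschitzWith C F) (ν : Measure E)
    [IsFiniteMeasure ν] {b : ℝ} (hb : 0 < b) (hb1 : b < 1) :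
    renyiIntegral b vol (ν.map F) ≤
      ∫⁻ z, jacobian F z ^ b * ν.rnDeriv vol z ^ (1 - b) ∂vol := by
  have hF_meas := hF.continuous.measurable
  set ρ := (ν.map F).rnDeriv vol
  have hρ : Measurable ρ := Measure.measurable_rnDeriv _ _
  obtain ⟨G, hG, hG_null, hFG⟩ := exists_restrict_eq_withDensity_rnDeriv (ν.map F) vol
  calc renyiIntegral b vol (ν.map F) = ∫⁻ y in G, ρ y ^ (-b) ∂ν.map F :=
        renyiIntegral_eq_setLIntegral hb1 hG_null hFG
    _ = ∫⁻ z in F ⁻¹' G, ρ (F z) ^ (-b) ∂ν := setLIntegral_map hG (hρ.pow_const _) hF_meas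
    _ = ∫⁻ z in F ⁻¹' G, ρ (F z) ^ (-b) * ν.rnDeriv vol z ∂vol := by
        rw [restrict_preimage_eq_withDensity_rnDeriv hF hG hρ hFG]
        refine (lintegral_withDensity_eq_lintegral_mul _ (Measure.measurable_rnDeriv ν vol)
          ((hρ.comp hF_meas).pow_const _)).trans ?_
        exact lintegral_congr fun z => mul_comm _ _
    _ ≤ ∫⁻ z in F ⁻¹' G, jacobian F z ^ b * ν.rnDeriv vol z ^ (1 - b) ∂vol := by
        refine lintegral_mono_ae ?_
        filter_upwards [rnDeriv_le_jacobian_mul hF hG hρ hFG,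
          ae_restrict_of_ae (Measure.rnDeriv_ne_top ν vol)] with z hle hz
        exact rpow_neg_mul_le hb hz hle
    _ ≤ ∫⁻ z, jacobian F z ^ b * ν.rnDeriv vol z ^ (1 - b) ∂vol :=
        lintegral_mono' Measure.restrict_le_self le_rfl

theorem ae_of_rnDeriv_ne_zero {X : Type*} [MeasurableSpace X] {μ : Measure X} (vol : Measure X)
    {P : X → Prop} (hP : ∀ᵐ z ∂μ, P z) : ∀ᵐ z ∂vol, μ.rnDeriv vol z ≠ 0 → P z := by
  obtain ⟨T, hPT, hT, hμT⟩ := exists_measurable_superset_of_null (ae_iff.1 hP)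
  have hzero : ∀ᵐ z ∂vol, z ∈ T → μ.rnDeriv vol z = 0 := by
    rw [← ae_restrict_iff' hT]
    exact (lintegral_eq_zero_iff (Measure.measurable_rnDeriv _ _)).1
      (le_antisymm ((Measure.setLIntegral_rnDeriv_le T).trans hμT.le) bot_le)
  filter_upwards [hzero] with z hz hz0
  by_contra hPz
  exact hz0 (hz (hPT hPz))

theorem renyiIntegral_map_interpolation_le {ν : Measure E} [IsFiniteMeasure ν] {F₀ F₁ : E → E}
    {C₀ C₁ : NNReal} (hF₀ : LipschitzWith C₀ F₀) (hF₁ : LipschitzWith C₁ F₁) {b t : ℝ}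
    (hb : 0 < b) (hb1 : b < 1)
    (hJ : ∀ᵐ z ∂vol, ν.rnDeriv vol z ≠ 0 →
      ENNReal.ofReal (1 - t) * jacobian F₀ z ^ b + ENNReal.ofReal t * jacobian F₁ z ^ b ≤ 1) :
    ENNReal.ofReal (1 - t) * renyiIntegral b vol (ν.map F₀) +
      ENNReal.ofReal t * renyiIntegral b vol (ν.map F₁) ≤ renyiIntegral b vol ν := by
  set σ := ν.rnDeriv vol
  have hmeas (F : E → E) : Measurable fun z => jacobian F z ^ b * σ z ^ (1 - b) :=
    ((measurable_jacobian F).pow_const b).mul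
      ((Measure.measurable_rnDeriv ν vol).pow_const (1 - b))
  calc ENNReal.ofReal (1 - t) * renyiIntegral b vol (ν.map F₀) +
        ENNReal.ofReal t * renyiIntegral b vol (ν.map F₁)
      ≤ ENNReal.ofReal (1 - t) * ∫⁻ z, jacobian F₀ z ^ b * σ z ^ (1 - b) ∂vol +
        ENNReal.ofReal t * ∫⁻ z, jacobian F₁ z ^ b * σ z ^ (1 - b) ∂vol := by
        gcongr
        · exact renyiIntegral_map_le hF₀ ν hb hb1
        · exact renyiIntegral_map_le hF₁ ν hb hb1
    _ = ∫⁻ z, (ENNReal.ofReal (1 - t) * jacobian F₀ z ^ b +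
          ENNReal.ofReal t * jacobian F₁ z ^ b) * σ z ^ (1 - b) ∂vol := by
        rw [← lintegral_const_mul _ (hmeas F₀), ← lintegral_const_mul _ (hmeas F₁),
          ← lintegral_add_left ((hmeas F₀).const_mul _)]
        exact lintegral_congr fun z => by ring
    _ ≤ renyiIntegral b vol ν := by
        refine lintegral_mono_ae ?_
        filter_upwards [hJ] with z hz
        rcases eq_or_ne (σ z) 0 with h0 | h0
        · simp [h0, hb1]
        · exact mul_le_of_le_one_left bot_le (hz h0)

end RenyiIntegral

section RegularCostEntropy

variable {E : Type*} [NormedAddCommGroup E] [NormedSpace ℝ E]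

theorem continuous_interpolate (t : ℝ) : Continuous (interpolate t : E × E → E) := by
  unfold interpolate
  fun_prop

theorem interpolate_sub_smul (t : ℝ) (p : E × E) :
    interpolate t p - t • (p.2 - p.1) = p.1 := by
  rw [interpolate]
  module

theorem interpolate_add_smul (t : ℝ) (p : E × E) :
    interpolate t p + (1 - t) • (p.2 - p.1) = p.2 := by
  rw [interpolate]
  module

theorem map_sub_velocity_map_interpolate [FiniteDimensional ℝ E] [MeasurableSpace E]
    [BorelSpace E] {t : ℝ} {π : Measure (E × E)} {V : E → E} (hV : Measurable V)
    (hVπ : ∀ᵐ p ∂π, V (interpolate t p) = p.2 - p.1) :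
    (π.map (interpolate t)).map (fun z => z - t • V z) = π.map Prod.fst := by
  rw [Measure.map_map (by fun_prop) (continuous_interpolate t).measurable]
  refine Measure.map_congr (hVπ.mono fun p hp => ?_)
  simp only [Function.comp_apply, hp, interpolate_sub_smul]

theorem map_add_velocity_map_interpolate [FiniteDimensional ℝ E] [MeasurableSpace E]
    [BorelSpace E] {t : ℝ} {π : Measure (E × E)} {V : E → E} (hV : Measurable V)
    (hVπ : ∀ᵐ p ∂π, V (interpolate t p) = p.2 - p.1) :
    (π.map (interpolate t)).map (fun z => z + (1 - t) • V z) = π.map Prod.snd := by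
  rw [Measure.map_map (by fun_prop) (continuous_interpolate t).measurable]
  refine Measure.map_congr (hVπ.mono fun p hp => ?_)
  simp only [Function.comp_apply, hp, interpolate_add_smul]

theorem ofReal_mul_rpow_add_le_one {t b x y : ℝ} (ht0 : 0 ≤ t) (ht1 : t ≤ 1) (hb : 0 ≤ b)
    (h : (1 - t) * |x| ^ b + t * |y| ^ b ≤ 1) :
    ENNReal.ofReal (1 - t) * ENNReal.ofReal |x| ^ b +
      ENNReal.ofReal t * ENNReal.ofReal |y| ^ b ≤ 1 := by
  have ht1' := sub_nonneg.2 ht1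
  rwa [ENNReal.ofReal_rpow_of_nonneg (abs_nonneg x) hb,
    ENNReal.ofReal_rpow_of_nonneg (abs_nonneg y) hb, ← ENNReal.ofReal_mul ht1',
    ← ENNReal.ofReal_mul ht0, ← ENNReal.ofReal_add (by positivity) (by positivity),
    ENNReal.ofReal_le_one]

theorem IsRegularCost.renyiIntegral_interpolate_ge [FiniteDimensional ℝ E] [MeasurableSpace E]
    [BorelSpace E] {vol : Measure E} [vol.IsAddHaarMeasure] {h : E → ℝ} {m K : ℝ}
    (hh : IsRegularCost h m K) {t : ℝ} (ht0 : 0 < t) (ht1 : t < 1) {π : Measure (E × E)}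
    [IsProbabilityMeasure π] {Γ : Set (E × E)} {φ ψ : E → ℝ} (hπΓ : ∀ᵐ p ∂π, p ∈ Γ)
    (hΓ : IsContactSet (fun p => h (p.2 - p.1)) φ ψ Γ) {b : ℝ} (hb : 0 < b) (hb1 : b < 1)
    (hb_dim : b * finrank ℝ E ≤ 1) :
    ENNReal.ofReal (1 - t) * renyiIntegral b vol (π.map Prod.fst) +
      ENNReal.ofReal t * renyiIntegral b vol (π.map Prod.snd) ≤
        renyiIntegral b vol (π.map (interpolate t)) := by
  obtain ⟨V, C, hV, hVΓ, hdet⟩ :=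
    hh.exists_lipschitz_velocity ht0 ht1 hΓ hπΓ.exists hb.le hb_dim
  have hmeas : Measurable (interpolate t : E × E → E) := (continuous_interpolate t).measurable
  let F₀ (z : E) : E := z - t • V z
  let F₁ (z : E) : E := z + (1 - t) • V z
  have hF₀ : LipschitzWith _ F₀ := LipschitzWith.id.sub ((lipschitzWith_smul t).comp hV)
  have hF₁ : LipschitzWith _ F₁ := LipschitzWith.id.add ((lipschitzWith_smul (1 - t)).comp hV)
  have hVπ : ∀ᵐ p ∂π, V (interpolate t p) = p.2 - p.1 := hπΓ.mono hVΓ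
  rw [← map_sub_velocity_map_interpolate hV.continuous.measurable hVπ,
    ← map_add_velocity_map_interpolate hV.continuous.measurable hVπ]
  have hjac : ∀ᵐ z ∂π.map (interpolate t), DifferentiableAt ℝ V z →
      ENNReal.ofReal (1 - t) * jacobian F₀ z ^ b + ENNReal.ofReal t * jacobian F₁ z ^ b ≤ 1 := by
    have hle : MeasurableSet {z | ENNReal.ofReal (1 - t) * jacobian F₀ z ^ b +
        ENNReal.ofReal t * jacobian F₁ z ^ b ≤ 1} :=
      measurableSet_le ((((measurable_jacobian F₀).pow_const b).const_mul _).add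
        (((measurable_jacobian F₁).pow_const b).const_mul _)) measurable_const
    refine (ae_map_iff hmeas.aemeasurable
      ((measurableSet_of_differentiableAt ℝ V).imp hle)).2 ?_
    filter_upwards [hπΓ] with p hp hd
    have hF₀' : HasFDerivAt F₀ _ (interpolate t p) :=
      (hasFDerivAt_id _).sub (hd.hasFDerivAt.const_smul t)
    have hF₁' : HasFDerivAt F₁ _ (interpolate t p) :=
      (hasFDerivAt_id _).add (hd.hasFDerivAt.const_smul (1 - t))
    rw [jacobian, jacobian, hF₀'.fderiv, hF₁'.fderiv]
    exact ofReal_mul_rpow_add_le_one ht0.le ht1.le hb.le (hdet p hp hd)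
  refine renyiIntegral_map_interpolation_le hF₀ hF₁ hb hb1 ?_
  filter_upwards [ae_of_rnDeriv_ne_zero vol hjac, hV.ae_differentiableAt] with z hz hd h0
  exact hz h0 hd

end RegularCostEntropy

section RenyiBound

variable {X : Type*} [MeasurableSpace X] {vol ν : Measure X} {b : ℝ}

theorem setLIntegral_rnDeriv_rpow_le (hb : 0 ≤ b) (hb1 : b ≤ 1) (s : Set X) :
    ∫⁻ w in s, ν.rnDeriv vol w ^ (1 - b) ∂vol ≤ ν s ^ (1 - b) * vol s ^ b := by
  have hb1' := sub_nonneg.2 hb1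
  have hölder := ENNReal.lintegral_mul_norm_pow_le (μ := vol.restrict s)
    (Measure.measurable_rnDeriv ν vol).aemeasurable (aemeasurable_const (b := 1))
    hb1' hb (sub_add_cancel 1 b)
  simp only [ENNReal.one_rpow, mul_one, lintegral_const, Measure.restrict_apply_univ,
    one_mul] at hölder
  refine hölder.trans ?_
  gcongr
  exact Measure.setLIntegral_rnDeriv_le s

theorem renyiIntegral_le_of_ae_mem (hb : 0 ≤ b) (hb1 : b < 1) {s : Set X}
    (hs : MeasurableSet s) (hν : ∀ᵐ z ∂ν, z ∈ s) :
    renyiIntegral b vol ν ≤ ν s ^ (1 - b) * vol s ^ b := by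
  refine le_trans ?_ (setLIntegral_rnDeriv_rpow_le hb hb1.le s)
  rw [renyiIntegral, ← lintegral_indicator hs]
  refine lintegral_mono_ae ?_
  filter_upwards [ae_of_rnDeriv_ne_zero vol hν] with z hz
  rcases eq_or_ne (ν.rnDeriv vol z) 0 with h0 | h0
  · simp only [h0, ENNReal.zero_rpow_of_pos (sub_pos.2 hb1), zero_le]
  · rw [indicator_of_mem (hz h0)]

end RenyiBound

section BallAverage

variable {E : Type*} [NormedAddCommGroup E] [MeasurableSpace E]

/-- The average density `ν (B(z, r)) / vol (B(z, r))` of `ν` around `z` at scale `r`; unlike the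
density of `ν`, it behaves well under weak limits. -/
def ballAverage (vol ν : Measure E) (r : ℝ) (z : E) : ℝ≥0∞ :=
  ν (Metric.closedBall z r) / vol (Metric.closedBall z r)

theorem ballAverage_eq_zero_of_notMem {vol ν : Measure E} {R : ℝ}
    (hν : ∀ᵐ z ∂ν, z ∈ Metric.closedBall (0 : E) R) {r : ℝ} {z : E}
    (hz : z ∉ Metric.closedBall (0 : E) (R + r)) : ballAverage vol ν r z = 0 := by
  have hdisj : ∀ᵐ w ∂ν, w ∉ Metric.closedBall z r := by
    refine hν.mono fun w hwR hw => hz ?_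
    rw [Metric.mem_closedBall] at *
    linarith [dist_triangle z w 0, dist_comm z w]
  rw [ballAverage, measure_eq_zero_iff_ae_notMem.2 hdisj, ENNReal.zero_div]

variable [BorelSpace E]

theorem ballAverage_eq (vol ν : Measure E) [vol.IsAddHaarMeasure] (r : ℝ) (z : E) :
    ballAverage vol ν r z = ν (Metric.closedBall z r) / vol (Metric.closedBall 0 r) := by
  rw [ballAverage, Measure.addHaar_closedBall_center vol]

theorem ballAverage_le_inv (vol ν : Measure E) [vol.IsAddHaarMeasure] [IsProbabilityMeasure ν]
    (r : ℝ) (z : E) : ballAverage vol ν r z ≤ (vol (Metric.closedBall 0 r))⁻¹ := by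
  rw [ballAverage_eq, ← one_div]
  gcongr
  exact prob_le_one

variable [NormedSpace ℝ E] [FiniteDimensional ℝ E]

theorem lintegral_setLIntegral_closedBall (vol : Measure E) [vol.IsAddHaarMeasure]
    (ν : Measure E) [SFinite ν] (r : ℝ) {g : E → ℝ≥0∞} (hg : Measurable g) :
    ∫⁻ z, ∫⁻ w in Metric.closedBall z r, g w ∂ν ∂vol =
      vol (Metric.closedBall 0 r) * ∫⁻ w, g w ∂ν := by
  have hclosed : IsClosed {p : E × E | dist p.2 p.1 ≤ r} :=
    isClosed_le (by fun_prop) continuous_const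
  have hmeas : Measurable (Function.uncurry fun z w => (Metric.closedBall z r).indicator g w) :=
    (hg.comp measurable_snd).indicator hclosed.measurableSet
  have hswap (z w : E) : (Metric.closedBall z r).indicator g w =
      (Metric.closedBall w r).indicator (fun _ => g w) z := by
    simp only [indicator, Metric.mem_closedBall, dist_comm]
  simp_rw [← lintegral_indicator Metric.isClosed_closedBall.measurableSet]
  rw [lintegral_lintegral_swap hmeas.aemeasurable]
  simp_rw [hswap, lintegral_indicator Metric.isClosed_closedBall.measurableSet,
    setLIntegral_const, Measure.addHaar_closedBall_center, mul_comm _ (vol _)]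
  exact lintegral_const_mul _ hg

variable {vol ν : Measure E} [vol.IsAddHaarMeasure]

theorem measurable_ballAverage [SFinite ν] (r : ℝ) : Measurable (ballAverage vol ν r) := by
  have hclosed : IsClosed {p : E × E | dist p.2 p.1 ≤ r} :=
    isClosed_le (by fun_prop) continuous_const
  simp_rw [funext fun z => ballAverage_eq vol ν r z]
  exact (measurable_measure_prodMk_left hclosed.measurableSet).div_const _

theorem lintegral_ballAverage [SFinite ν] {r : ℝ} (hr : 0 < r) :
    ∫⁻ z, ballAverage vol ν r z ∂vol = ν univ := by
  have hpos : vol (Metric.closedBall 0 r) ≠ 0 := (Metric.measure_closedBall_pos vol 0 hr).ne'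
  have hfubini := lintegral_setLIntegral_closedBall vol ν r (g := fun _ => 1) measurable_const
  simp only [lintegral_one, Measure.restrict_apply_univ] at hfubini
  simp_rw [ballAverage_eq, div_eq_mul_inv]
  rw [lintegral_mul_const' _ _ (ENNReal.inv_ne_top.2 hpos), hfubini, mul_comm, ← mul_assoc,
    ENNReal.inv_mul_cancel hpos measure_closedBall_lt_top.ne, one_mul]

theorem renyiIntegral_le_lintegral_ballAverage [SFinite ν] {r b : ℝ} (hr : 0 < r) (hb : 0 ≤ b)
    (hb1 : b ≤ 1) :
    renyiIntegral b vol ν ≤ ∫⁻ z, ballAverage vol ν r z ^ (1 - b) ∂vol := by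
  set β := vol (Metric.closedBall (0 : E) r) with hβ
  have hpos : β ≠ 0 := (Metric.measure_closedBall_pos vol 0 hr).ne'
  have hfin : β ≠ ∞ := measure_closedBall_lt_top.ne
  have hjensen (z : E) : ∫⁻ w in Metric.closedBall z r, ν.rnDeriv vol w ^ (1 - b) ∂vol ≤
      β * ballAverage vol ν r z ^ (1 - b) := by
    refine (setLIntegral_rnDeriv_rpow_le hb hb1 _).trans_eq ?_
    have hβ_split : β = β ^ (1 - b) * β ^ b := by
      rw [← ENNReal.rpow_add _ _ hpos hfin, sub_add_cancel, ENNReal.rpow_one]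
    rw [ballAverage_eq, Measure.addHaar_closedBall_center vol, ← hβ]
    conv_rhs => enter [1]; rw [hβ_split]
    rw [mul_right_comm, ← ENNReal.mul_rpow_of_nonneg _ _ (sub_nonneg.2 hb1),
      ENNReal.mul_div_cancel hpos hfin]
  rw [← ENNReal.mul_le_mul_iff_right hpos hfin, renyiIntegral,
    ← lintegral_setLIntegral_closedBall vol vol r ((Measure.measurable_rnDeriv ν vol).pow_const _),
    ← lintegral_const_mul _ ((measurable_ballAverage r).pow_const _)]
  exact lintegral_mono hjensen

/- The portmanteau theorem gives upper semicontinuity of `ν ↦ ν (closedBall z r)`, and the reverse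
Fatou lemma passes it to the integral. -/
theorem limsup_lintegral_ballAverage_le {νs : ℕ → ProbabilityMeasure E}
    {ν : ProbabilityMeasure E} (hlim : Tendsto νs atTop (𝓝 ν)) {R : ℝ}
    (hνs : ∀ n, ∀ᵐ z ∂(νs n : Measure E), z ∈ Metric.closedBall (0 : E) R) {b r : ℝ}
    (hr : 0 < r) (hb1 : b < 1) :
    limsup (fun n => ∫⁻ z, ballAverage vol (νs n) r z ^ (1 - b) ∂vol) atTop ≤
      ∫⁻ z, ballAverage vol ν r z ^ (1 - b) ∂vol := by
  have hb1' : 0 < 1 - b := sub_pos.2 hb1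
  have hpos : vol (Metric.closedBall 0 r) ≠ 0 := (Metric.measure_closedBall_pos vol 0 hr).ne'
  have hbound (n : ℕ) (z : E) : ballAverage vol (νs n) r z ^ (1 - b) ≤
      (Metric.closedBall 0 (R + r)).indicator
        (fun _ => (vol (Metric.closedBall 0 r))⁻¹ ^ (1 - b)) z := by
    by_cases hz : z ∈ Metric.closedBall (0 : E) (R + r)
    · rw [indicator_of_mem hz]
      gcongr
      exact ballAverage_le_inv _ _ r z
    · simp only [ballAverage_eq_zero_of_notMem (hνs n) hz, ENNReal.zero_rpow_of_pos hb1', zero_le]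
  refine (limsup_lintegral_le _ (fun n => (measurable_ballAverage r).pow_const _)
    (fun n => ae_of_all _ (hbound n)) ?_).trans (lintegral_mono fun z => ?_)
  · rw [lintegral_indicator_const Metric.isClosed_closedBall.measurableSet]
    exact ENNReal.mul_ne_top (ENNReal.rpow_ne_top_of_nonneg hb1'.le (ENNReal.inv_ne_top.2 hpos))
      measure_closedBall_lt_top.ne
  · have hclosed := ProbabilityMeasure.limsup_measure_closed_le_of_tendsto hlim
      (Metric.isClosed_closedBall (x := z) (ε := r))
    have hmono : Monotone fun x : ℝ≥0∞ => (x / vol (Metric.closedBall z r)) ^ (1 - b) :=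
      fun x y hxy => by dsimp only; gcongr
    have hcont : Continuous fun x : ℝ≥0∞ => (x / vol (Metric.closedBall z r)) ^ (1 - b) :=
      ENNReal.continuous_rpow_const.comp
        (ENNReal.continuous_div_const _ (Metric.measure_closedBall_pos vol z hr).ne')
    exact (hmono.map_limsup_of_continuousAt _ hcont.continuousAt).symm.trans_le (hmono hclosed)

theorem rpow_le_min_rpow_add {x T : ℝ≥0∞} {b : ℝ} (hb : 0 ≤ b) (hT0 : T ≠ 0) (hT : T ≠ ∞) :
    x ^ (1 - b) ≤ min x T ^ (1 - b) + T ^ (-b) * x := by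
  rcases le_total x T with hxT | hTx
  · rw [min_eq_left hxT]
    exact le_self_add
  refine le_trans ?_ le_add_self
  have hTb : T ^ (-b) ≠ 0 := (ENNReal.rpow_pos (pos_iff_ne_zero.2 hT0) hT).ne'
  rcases eq_or_ne x ∞ with rfl | hx
  · rw [ENNReal.mul_top hTb]
    exact le_top
  have hx0 : x ≠ 0 := ne_bot_of_le_ne_bot hT0 hTx
  rw [sub_eq_neg_add, ENNReal.rpow_add _ _ hx0 hx, ENNReal.rpow_one, ENNReal.rpow_neg,
    ENNReal.rpow_neg]
  gcongr

theorem lintegral_ballAverage_rpow_le [IsProbabilityMeasure ν] {r b : ℝ} (hr : 0 < r)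
    (hb : 0 ≤ b) {T : ℝ≥0∞} (hT0 : T ≠ 0) (hT : T ≠ ∞) :
    ∫⁻ z, ballAverage vol ν r z ^ (1 - b) ∂vol ≤
      ∫⁻ z, min (ballAverage vol ν r z) T ^ (1 - b) ∂vol + T ^ (-b) := by
  calc ∫⁻ z, ballAverage vol ν r z ^ (1 - b) ∂vol
      ≤ ∫⁻ z, (min (ballAverage vol ν r z) T ^ (1 - b) + T ^ (-b) * ballAverage vol ν r z) ∂vol :=
        lintegral_mono fun z => rpow_le_min_rpow_add hb hT0 hT
    _ = ∫⁻ z, min (ballAverage vol ν r z) T ^ (1 - b) ∂vol + T ^ (-b) := by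
        rw [lintegral_add_left
            (((measurable_ballAverage r).min measurable_const).pow_const (1 - b)),
          lintegral_const_mul _ (measurable_ballAverage r), lintegral_ballAverage hr,
          measure_univ, mul_one]

theorem tendsto_lintegral_min_ballAverage_rpow [IsProbabilityMeasure ν] {R : ℝ}
    (hν : ∀ᵐ z ∂ν, z ∈ Metric.closedBall (0 : E) R) {b : ℝ} (hb1 : b < 1) {T : ℝ≥0∞}
    (hT : T ≠ ∞) :
    Tendsto (fun r => ∫⁻ z, min (ballAverage vol ν r z) T ^ (1 - b) ∂vol) (𝓝[>] 0)
      (𝓝 (∫⁻ z, min (ν.rnDeriv vol z) T ^ (1 - b) ∂vol)) := by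
  have hb1' : 0 < 1 - b := sub_pos.2 hb1
  refine tendsto_lintegral_filter_of_dominated_convergence
    ((Metric.closedBall (0 : E) (R + 1)).indicator fun _ => T ^ (1 - b))
    (Eventually.of_forall fun r =>
      ((measurable_ballAverage r).min measurable_const).pow_const (1 - b)) ?_ ?_ ?_
  · filter_upwards [Ioc_mem_nhdsGT one_pos] with r hr
    refine ae_of_all _ fun z => ?_
    by_cases hz : z ∈ Metric.closedBall (0 : E) (R + 1)
    · rw [indicator_of_mem hz]
      gcongr
      exact min_le_right _ _
    · have hzr : z ∉ Metric.closedBall (0 : E) (R + r) := fun h =>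
        hz (Metric.closedBall_subset_closedBall (by linarith [hr.2]) h)
      simp only [ballAverage_eq_zero_of_notMem hν hzr, zero_le, min_eq_left,
        ENNReal.zero_rpow_of_pos hb1']
  · rw [lintegral_indicator_const Metric.isClosed_closedBall.measurableSet]
    exact ENNReal.mul_ne_top (ENNReal.rpow_ne_top_of_nonneg hb1'.le hT)
      measure_closedBall_lt_top.ne
  · filter_upwards [Besicovitch.ae_tendsto_rnDeriv ν vol] with z hz
    exact (ENNReal.continuous_rpow_const.tendsto _).comp (hz.min tendsto_const_nhds)

theorem le_renyiIntegral_of_le_lintegral_ballAverage [IsProbabilityMeasure ν] {R : ℝ}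
    (hν : ∀ᵐ z ∂ν, z ∈ Metric.closedBall (0 : E) R) {b : ℝ} (hb : 0 < b) (hb1 : b < 1)
    {c : ℝ≥0∞} (hc : ∀ r > 0, c ≤ ∫⁻ z, ballAverage vol ν r z ^ (1 - b) ∂vol) :
    c ≤ renyiIntegral b vol ν := by
  have htrunc {T : ℝ≥0∞} (hT0 : T ≠ 0) (hT : T ≠ ∞) : c ≤ renyiIntegral b vol ν + T ^ (-b) := by
    have hle : c ≤ ∫⁻ z, min (ν.rnDeriv vol z) T ^ (1 - b) ∂vol + T ^ (-b) :=
      ge_of_tendsto ((tendsto_lintegral_min_ballAverage_rpow hν hb1 hT).add_const _)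
        (eventually_mem_nhdsWithin.mono fun r hr =>
          (hc r hr).trans (lintegral_ballAverage_rpow_le hr hb.le hT0 hT))
    refine hle.trans ?_
    gcongr
    exact lintegral_mono fun z =>
      ENNReal.rpow_le_rpow (min_le_left _ _) (sub_nonneg.2 hb1.le)
  have hT_top : Tendsto (fun T : ℝ≥0∞ => renyiIntegral b vol ν + T ^ (-b)) (𝓝[≠] ∞)
      (𝓝 (renyiIntegral b vol ν)) := by
    have hrpow := ENNReal.continuous_rpow_const (y := -b) |>.tendsto ∞
    rw [ENNReal.top_rpow_of_neg (neg_lt_zero.2 hb)] at hrpow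
    simpa only [add_zero] using
      (hrpow.mono_left nhdsWithin_le_nhds).const_add (renyiIntegral b vol ν)
  refine ge_of_tendsto hT_top ?_
  filter_upwards [eventually_mem_nhdsWithin, nhdsWithin_le_nhds (lt_mem_nhds zero_lt_top)]
    with T hT hT0
  exact htrunc hT0.ne' hT

theorem limsup_renyiIntegral_le {νs : ℕ → ProbabilityMeasure E} {ν : ProbabilityMeasure E}
    (hlim : Tendsto νs atTop (𝓝 ν)) {R : ℝ}
    (hνs : ∀ n, ∀ᵐ z ∂(νs n : Measure E), z ∈ Metric.closedBall (0 : E) R)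
    (hν : ∀ᵐ z ∂(ν : Measure E), z ∈ Metric.closedBall (0 : E) R) {b : ℝ} (hb : 0 < b)
    (hb1 : b < 1) :
    limsup (fun n => renyiIntegral b vol (νs n : Measure E)) atTop ≤ renyiIntegral b vol ν := by
  refine le_renyiIntegral_of_le_lintegral_ballAverage hν hb hb1 fun r hr => ?_
  refine le_trans ?_ (limsup_lintegral_ballAverage_le hlim hνs hr hb1)
  exact limsup_le_limsup (Eventually.of_forall fun n =>
    renyiIntegral_le_lintegral_ballAverage hr hb.le hb1.le)

end BallAverage

section Wasserstein

theorem transportPlans_swap {X Y : Type*} [MeasurableSpace X] [MeasurableSpace Y]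
    {μ : Measure X} {ν : Measure Y} {γ : Measure (X × Y)} (hγ : γ ∈ transportPlans μ ν) :
    γ.map Prod.swap ∈ transportPlans ν μ := by
  obtain ⟨_, hfst, hsnd⟩ := hγ
  refine ⟨Measure.isProbabilityMeasure_map measurable_swap.aemeasurable, ?_, ?_⟩
  · rwa [Measure.map_map measurable_fst measurable_swap]
  · rwa [Measure.map_map measurable_snd measurable_swap]

-- Conditionally on the middle point, the two outer points are drawn independently.
theorem exists_glued_transportPlan {X Y Z : Type*} [MeasurableSpace X] [StandardBorelSpace X]
    [MeasurableSpace Y] [MeasurableSpace Z] [StandardBorelSpace Z] {μ : Measure X}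
    {ν : Measure Y} {ρ : Measure Z} {γ₁ : Measure (X × Y)} {γ₂ : Measure (Y × Z)}
    (hγ₁ : γ₁ ∈ transportPlans μ ν) (hγ₂ : γ₂ ∈ transportPlans ν ρ) :
    ∃ G : Measure (Y × X × Z), IsProbabilityMeasure G ∧
      G.map (fun q => (q.2.1, q.1)) = γ₁ ∧ G.map (fun q => (q.1, q.2.2)) = γ₂ := by
  obtain ⟨_, hγ₁_fst, -⟩ := transportPlans_swap hγ₁
  obtain ⟨_, hγ₂_fst, -⟩ := hγ₂
  have : Nonempty (Y × X) := nonempty_of_isProbabilityMeasure (γ₁.map Prod.swap)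
  have : Nonempty (Y × Z) := nonempty_of_isProbabilityMeasure γ₂
  have : Nonempty X := .map Prod.snd ‹Nonempty (Y × X)›
  have : Nonempty Z := .map Prod.snd ‹Nonempty (Y × Z)›
  have disint₁ : ν.compProd (γ₁.map Prod.swap).condKernel = γ₁.map Prod.swap := by
    rw [← hγ₁_fst]
    exact Measure.disintegrate _ _
  have disint₂ : ν.compProd γ₂.condKernel = γ₂ := by
    rw [← hγ₂_fst]
    exact Measure.disintegrate _ _
  have : IsProbabilityMeasure ν := by
    rw [← hγ₂_fst]
    exact Measure.isProbabilityMeasure_map measurable_fst.aemeasurable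
  let κ := (γ₁.map Prod.swap).condKernel.prod γ₂.condKernel
  have map_fst : γ₁.map Prod.swap = (ν.compProd κ).map (Prod.map id Prod.fst) := by
    rw [← Measure.compProd_map measurable_fst, ← ProbabilityTheory.Kernel.fst_eq,
      ProbabilityTheory.Kernel.fst_prod, disint₁]
  have map_snd : γ₂ = (ν.compProd κ).map (Prod.map id Prod.snd) := by
    rw [← Measure.compProd_map measurable_snd, ← ProbabilityTheory.Kernel.snd_eq,
      ProbabilityTheory.Kernel.snd_prod, disint₂]
  refine ⟨ν.compProd κ, inferInstance, ?_, map_snd.symm⟩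
  have swap_swap : (γ₁.map Prod.swap).map Prod.swap = γ₁ := by
    rw [Measure.map_map measurable_swap measurable_swap, Prod.swap_swap_eq, Measure.map_id]
  rw [← swap_swap, map_fst, Measure.map_map measurable_swap (by fun_prop)]
  rfl

variable {X : Type*} [PseudoEMetricSpace X] [MeasurableSpace X]

/-- The transport cost of a plan `π` for the squared distance. -/
def quadraticCost (π : Measure (X × X)) : ℝ≥0∞ := ∫⁻ p, edist p.1 p.2 ^ 2 ∂π

/-- The quadratic Wasserstein distance, with values in `[0, ∞]`. -/
def wasserstein₂ (μ ν : Measure X) : ℝ≥0∞ :=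
  (⨅ γ ∈ transportPlans μ ν, quadraticCost γ) ^ (1 / 2 : ℝ)

variable {μ ν : Measure X}

theorem wasserstein₂_eq_iInf (μ ν : Measure X) :
    wasserstein₂ μ ν = ⨅ γ ∈ transportPlans μ ν, quadraticCost γ ^ (1 / 2 : ℝ) := by
  simp only [wasserstein₂, ← ENNReal.orderIsoRpow_apply (1 / 2 : ℝ) (by norm_num),
    OrderIso.map_iInf]

theorem wasserstein₂_le {γ : Measure (X × X)} (hγ : γ ∈ transportPlans μ ν) :
    wasserstein₂ μ ν ≤ quadraticCost γ ^ (1 / 2 : ℝ) := by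
  rw [wasserstein₂_eq_iInf]
  exact iInf₂_le γ hγ

theorem wasserstein₂_eq_of_isMinOn {γ : Measure (X × X)} (hγ : γ ∈ transportPlans μ ν)
    (hmin : IsMinOn quadraticCost (transportPlans μ ν) γ) :
    wasserstein₂ μ ν = quadraticCost γ ^ (1 / 2 : ℝ) := by
  rw [wasserstein₂]
  exact congrArg (· ^ (1 / 2 : ℝ)) (le_antisymm (iInf₂_le γ hγ) (le_iInf₂ hmin))

variable [OpensMeasurableSpace X] [SecondCountableTopology X]

theorem quadraticCost_map {Ω : Type*} [MeasurableSpace Ω] (G : Measure Ω) {f g : Ω → X}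
    (hf : Measurable f) (hg : Measurable g) :
    quadraticCost (G.map fun ω => (f ω, g ω)) = ∫⁻ ω, edist (f ω) (g ω) ^ 2 ∂G :=
  lintegral_map (by fun_prop) (hf.prodMk hg)

theorem wasserstein₂_map_le {Ω : Type*} [MeasurableSpace Ω] {G : Measure Ω}
    [IsProbabilityMeasure G] {f g : Ω → X} (hf : Measurable f) (hg : Measurable g) :
    wasserstein₂ (G.map f) (G.map g) ≤ (∫⁻ ω, edist (f ω) (g ω) ^ 2 ∂G) ^ (1 / 2 : ℝ) := by
  have hfg := hf.prodMk hg
  rw [← quadraticCost_map G hf hg]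
  refine wasserstein₂_le ⟨Measure.isProbabilityMeasure_map hfg.aemeasurable, ?_, ?_⟩
  · exact Measure.map_map measurable_fst hfg
  · exact Measure.map_map measurable_snd hfg

theorem wasserstein₂_comm (μ ν : Measure X) : wasserstein₂ μ ν = wasserstein₂ ν μ := by
  suffices h : ∀ μ ν : Measure X, wasserstein₂ μ ν ≤ wasserstein₂ ν μ from
    le_antisymm (h μ ν) (h ν μ)
  intro μ ν
  rw [wasserstein₂_eq_iInf ν μ]
  refine le_iInf₂ fun γ hγ => (wasserstein₂_le (transportPlans_swap hγ)).trans_eq ?_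
  rw [show γ.map Prod.swap = γ.map fun p => (p.2, p.1) from rfl,
    quadraticCost_map γ measurable_snd measurable_fst]
  simp only [quadraticCost, edist_comm]

theorem wasserstein₂_triangle [StandardBorelSpace X] (μ ν ρ : Measure X) :
    wasserstein₂ μ ρ ≤ wasserstein₂ μ ν + wasserstein₂ ν ρ := by
  rw [wasserstein₂_eq_iInf μ ν, wasserstein₂_eq_iInf ν ρ]
  refine ENNReal.le_iInf₂_add_iInf₂ fun γ₁ hγ₁ γ₂ hγ₂ => ?_
  obtain ⟨G, _, hG₁, hG₂⟩ := exists_glued_transportPlan hγ₁ hγ₂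
  have hμ : G.map (fun q => q.2.1) = μ := by
    rw [← hγ₁.2.1, ← hG₁, Measure.map_map measurable_fst (by fun_prop)]
    rfl
  have hρ : G.map (fun q => q.2.2) = ρ := by
    rw [← hγ₂.2.2, ← hG₂, Measure.map_map measurable_snd (by fun_prop)]
    rfl
  have minkowski := ENNReal.lintegral_Lp_add_le (μ := G) (p := 2)
    (f := fun q => edist q.2.1 q.1) (g := fun q => edist q.1 q.2.2)
    (by fun_prop) (by fun_prop) (by norm_num)
  simp only [ENNReal.rpow_two, Pi.add_apply] at minkowski
  rw [← hμ, ← hρ, ← hG₁, ← hG₂, quadraticCost_map G (by fun_prop) (by fun_prop),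
    quadraticCost_map G (by fun_prop) (by fun_prop)]
  refine (wasserstein₂_map_le (by fun_prop) (by fun_prop)).trans (le_trans ?_ minkowski)
  gcongr
  exact edist_triangle _ _ _

end Wasserstein

section Geodesic

theorem eq_ofReal_abs_sub_mul_of_le {α : Type*} {d : α → α → ℝ≥0∞} (d_comm : ∀ x y, d x y = d y x)
    (d_triangle : ∀ x y z, d x z ≤ d x y + d y z) {x : ℝ → α} (hd : d (x 0) (x 1) ≠ ∞)
    (hle : ∀ s t, d (x s) (x t) ≤ ENNReal.ofReal |s - t| * d (x 0) (x 1)) {s t : ℝ}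
    (hs : s ∈ Icc 0 1) (ht : t ∈ Icc 0 1) :
    d (x s) (x t) = ENNReal.ofReal |s - t| * d (x 0) (x 1) := by
  wlog hst : s ≤ t generalizing s t
  · rw [d_comm, abs_sub_comm, this ht hs (le_of_not_ge hst)]
  refine le_antisymm (hle s t) ?_
  have hs0 := hle 0 s
  have ht1 := hle t 1
  rw [abs_sub_comm, sub_zero, abs_of_nonneg hs.1] at hs0
  rw [abs_sub_comm, abs_of_nonneg (sub_nonneg.2 ht.2)] at ht1
  rw [abs_sub_comm, abs_of_nonneg (sub_nonneg.2 hst)]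
  set D := d (x 0) (x 1)
  have hD : ENNReal.ofReal s * D + ENNReal.ofReal (t - s) * D + ENNReal.ofReal (1 - t) * D = D := by
    rw [← add_mul, ← add_mul, ← ENNReal.ofReal_add hs.1 (sub_nonneg.2 hst),
      ← ENNReal.ofReal_add (by linarith [hs.1]) (sub_nonneg.2 ht.2)]
    simp
  have hpath : D ≤ ENNReal.ofReal s * D + d (x s) (x t) + ENNReal.ofReal (1 - t) * D :=
    calc D ≤ d (x 0) (x s) + d (x s) (x t) + d (x t) (x 1) :=
          (d_triangle _ (x t) _).trans (add_le_add_left (d_triangle _ _ _) _)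
      _ ≤ _ := by gcongr
  have hfin (r : ℝ) : ENNReal.ofReal r * D ≠ ∞ := ENNReal.mul_ne_top ENNReal.ofReal_ne_top hd
  nth_rewrite 1 [← hD] at hpath
  exact (ENNReal.add_le_add_iff_left (hfin s)).1 ((ENNReal.add_le_add_iff_right (hfin _)).1 hpath)

variable {E : Type*} [NormedAddCommGroup E] [NormedSpace ℝ E]

theorem edist_interpolate (s t : ℝ) (p : E × E) :
    edist (interpolate s p) (interpolate t p) = ENNReal.ofReal |s - t| * edist p.1 p.2 := by
  rw [edist_eq_enorm_sub, edist_eq_enorm_sub, ← Real.enorm_eq_ofReal_abs, ← enorm_neg (p.1 - p.2),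
    ← enorm_smul, interpolate, interpolate]
  congr 1
  module

theorem interpolate_zero : interpolate (0 : ℝ) = (Prod.fst : E × E → E) := by
  funext p
  simp [interpolate]

theorem interpolate_one : interpolate (1 : ℝ) = (Prod.snd : E × E → E) := by
  funext p
  simp [interpolate]

theorem interpolate_mem_closedBall {R t : ℝ} (ht : t ∈ Icc 0 1) {p : E × E}
    (hfst : p.1 ∈ Metric.closedBall 0 R) (hsnd : p.2 ∈ Metric.closedBall 0 R) :
    interpolate t p ∈ Metric.closedBall 0 R :=
  convex_closedBall 0 R hfst hsnd (sub_nonneg.2 ht.2) ht.1 (sub_add_cancel 1 t)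

variable [MeasurableSpace E] [BorelSpace E] [SecondCountableTopology E] {π : Measure (E × E)}
  [IsProbabilityMeasure π]

theorem wasserstein₂_map_interpolate_le (s t : ℝ) :
    wasserstein₂ (π.map (interpolate s)) (π.map (interpolate t)) ≤
      ENNReal.ofReal |s - t| * quadraticCost π ^ (1 / 2 : ℝ) := by
  refine (wasserstein₂_map_le (continuous_interpolate s).measurable
    (continuous_interpolate t).measurable).trans_eq ?_
  simp only [edist_interpolate, mul_pow]
  rw [lintegral_const_mul _ (by fun_prop), ENNReal.mul_rpow_of_nonneg _ _ (by norm_num),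
    ← ENNReal.rpow_two, ← ENNReal.rpow_mul, quadraticCost]
  norm_num

theorem wasserstein₂_map_interpolate [StandardBorelSpace E] {μ ν : Measure E}
    (hπ : π ∈ transportPlans μ ν) (hmin : IsMinOn quadraticCost (transportPlans μ ν) π)
    (hfin : quadraticCost π ≠ ∞) {s t : ℝ} (hs : s ∈ Icc 0 1) (ht : t ∈ Icc 0 1) :
    wasserstein₂ (π.map (interpolate s)) (π.map (interpolate t)) =
      ENNReal.ofReal |s - t| * wasserstein₂ μ ν := by
  have hends : wasserstein₂ (π.map (interpolate 0)) (π.map (interpolate 1)) =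
      quadraticCost π ^ (1 / 2 : ℝ) := by
    rw [interpolate_zero, interpolate_one, hπ.2.1, hπ.2.2, wasserstein₂_eq_of_isMinOn hπ hmin]
  rw [wasserstein₂_eq_of_isMinOn hπ hmin, ← hends]
  refine eq_ofReal_abs_sub_mul_of_le wasserstein₂_comm wasserstein₂_triangle
    (x := fun r => π.map (interpolate r)) ?_ (fun r u => ?_) hs ht <;> rw [hends]
  · exact ENNReal.rpow_ne_top_of_nonneg (by norm_num) hfin
  · exact wasserstein₂_map_interpolate_le r u

end Geodesic

section Compactness

theorem integrable_of_continuous_of_ae_mem_isCompact {X : Type*} [TopologicalSpace X] [T2Space X]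
    [MeasurableSpace X] [OpensMeasurableSpace X] {π : Measure X} [IsFiniteMeasure π] {K : Set X}
    (hK : IsCompact K) (hπ : ∀ᵐ x ∂π, x ∈ K) {f : X → ℝ} (hf : Continuous f) : Integrable f π := by
  rw [← Measure.restrict_eq_self_of_ae_mem hπ]
  exact hf.continuousOn.integrableOn_compact' hK hK.measurableSet

theorem integral_le_add_of_abs_sub_le {X : Type*} [MeasurableSpace X] {π γ : Measure X}
    [IsProbabilityMeasure π] [IsProbabilityMeasure γ] {f c : X → ℝ} {δ : ℝ}
    (hfπ : Integrable f π) (hfγ : Integrable f γ) (hcπ : Integrable c π) (hcγ : Integrable c γ)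
    (hπ : ∀ᵐ x ∂π, |c x - f x| ≤ δ) (hγ : ∀ᵐ x ∂γ, |c x - f x| ≤ δ)
    (hle : ∫ x, c x ∂π ≤ ∫ x, c x ∂γ) : ∫ x, f x ∂π ≤ ∫ x, f x ∂γ + 2 * δ :=
  calc ∫ x, f x ∂π ≤ ∫ x, (c x + δ) ∂π := by
        refine integral_mono_ae hfπ (hcπ.add (integrable_const δ)) (hπ.mono fun x hx => ?_)
        linarith [abs_le.1 hx]
    _ = ∫ x, c x ∂π + δ := by simp [integral_add hcπ (integrable_const δ)]
    _ ≤ ∫ x, c x ∂γ + δ := by gcongr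
    _ ≤ ∫ x, (f x + δ) ∂γ + δ := by
        refine add_le_add_left
          (integral_mono_ae hcγ (hfγ.add (integrable_const δ)) (hγ.mono fun x hx => ?_)) δ
        rw [Pi.add_apply]
        linarith [abs_le.1 hx]
    _ = ∫ x, f x ∂γ + 2 * δ := by
        simp [integral_add hfγ (integrable_const δ)]
        ring

theorem isCompact_transportPlans {X Y : Type*} [TopologicalSpace X] [PolishSpace X]
    [MeasurableSpace X] [BorelSpace X] [TopologicalSpace Y] [PolishSpace Y] [MeasurableSpace Y]
    [BorelSpace Y] (μ : Measure X) (ν : Measure Y) [IsProbabilityMeasure μ]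
    [IsProbabilityMeasure ν] :
    IsCompact {π : ProbabilityMeasure (X × Y) | (π : Measure (X × Y)) ∈ transportPlans μ ν} := by
  have htight : IsTightMeasureSet (transportPlans μ ν) := by
    refine IsTightMeasureSet.prodMk
      ((isTightMeasureSet_singleton (μ := μ)).subset ?_)
      ((isTightMeasureSet_singleton (μ := ν)).subset ?_)
    · rintro _ ⟨π, hπ, rfl⟩
      exact hπ.2.1
    · rintro _ ⟨π, hπ, rfl⟩
      exact hπ.2.2
  have hclosed : IsClosed
      {π : ProbabilityMeasure (X × Y) | (π : Measure (X × Y)) ∈ transportPlans μ ν} := by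
    have hfst : IsClosed {π : ProbabilityMeasure (X × Y) |
        π.map measurable_fst.aemeasurable = ⟨μ, inferInstance⟩} :=
      isClosed_singleton.preimage (ProbabilityMeasure.continuous_map continuous_fst)
    have hsnd : IsClosed {π : ProbabilityMeasure (X × Y) |
        π.map measurable_snd.aemeasurable = ⟨ν, inferInstance⟩} :=
      isClosed_singleton.preimage (ProbabilityMeasure.continuous_map continuous_snd)
    convert hfst.inter hsnd using 1
    ext π
    exact ⟨fun h => ⟨Subtype.ext h.2.1, Subtype.ext h.2.2⟩,
      fun h => ⟨π.2, congrArg Subtype.val h.1, congrArg Subtype.val h.2⟩⟩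
  rw [← hclosed.closure_eq]
  refine isCompact_closure_of_isTightMeasureSet (htight.subset ?_)
  rintro _ ⟨π, hπ, rfl⟩
  exact hπ

theorem quadraticCost_le_liminf {X : Type*} [PseudoMetricSpace X] [MeasurableSpace X]
    [OpensMeasurableSpace X] [SecondCountableTopology X] {πs : ℕ → ProbabilityMeasure (X × X)}
    {π : ProbabilityMeasure (X × X)} (hlim : Tendsto πs atTop (𝓝 π)) :
    quadraticCost (π : Measure (X × X)) ≤
      liminf (fun n => quadraticCost (πs n : Measure (X × X))) atTop := by
  have hcost (γ : Measure (X × X)) :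
      quadraticCost γ = ∫⁻ p, ENNReal.ofReal (dist p.1 p.2 ^ 2) ∂γ := by
    simp only [quadraticCost, edist_dist, ENNReal.ofReal_pow dist_nonneg]
  simp only [hcost]
  exact lintegral_le_liminf_lintegral_of_forall_isOpen_measure_le_liminf_measure
    (by fun_prop) (fun p => sq_nonneg _)
    fun G hG => ProbabilityMeasure.le_liminf_measure_open_of_tendsto hlim hG

end Compactness

section OptimalPlan

variable {E : Type*} [NormedAddCommGroup E] [MeasurableSpace E]

theorem quadraticCost_eq_ofReal_integral {π : Measure (E × E)}
    (hπ : Integrable (fun p => ‖p.2 - p.1‖ ^ 2) π) :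
    quadraticCost π = ENNReal.ofReal (∫ p, ‖p.2 - p.1‖ ^ 2 ∂π) := by
  rw [ofReal_integral_eq_lintegral_ofReal hπ (ae_of_all _ fun p => sq_nonneg _)]
  simp only [quadraticCost, edist_dist, dist_eq_norm', ENNReal.ofReal_pow (norm_nonneg _)]

variable [NormedSpace ℝ E]

/-- The Rényi integrals of the interpolants `(1 - t) x + t y` of the plan `π` dominate the chords
between those of its marginals, for all exponents `b = 1 / N` with `N ≥ dim E`. -/
def HasConcaveRenyiIntegrals (vol : Measure E) (π : Measure (E × E)) : Prop :=
  ∀ t ∈ Ioo (0 : ℝ) 1, ∀ b ∈ Ioo (0 : ℝ) 1, b * finrank ℝ E ≤ 1 →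
    ENNReal.ofReal (1 - t) * renyiIntegral b vol (π.map Prod.fst) +
      ENNReal.ofReal t * renyiIntegral b vol (π.map Prod.snd) ≤
        renyiIntegral b vol (π.map (interpolate t))

variable [BorelSpace E] [FiniteDimensional ℝ E] {vol μ ν : Measure E} {R : NNReal}

theorem integrable_of_mem_transportPlans (hμ : ∀ᵐ z ∂μ, z ∈ Metric.closedBall 0 (R : ℝ))
    (hν : ∀ᵐ z ∂ν, z ∈ Metric.closedBall 0 (R : ℝ)) {γ : Measure (E × E)}
    (hγ : γ ∈ transportPlans μ ν) {f : E × E → ℝ} (hf : Continuous f) : Integrable f γ :=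
  have := hγ.1
  have hball : IsCompact (Metric.closedBall (0 : E) R) := isCompact_closedBall 0 _
  integrable_of_continuous_of_ae_mem_isCompact (hball.prod hball)
    ((ae_fst_of_mem_transportPlans hγ hμ).and (ae_snd_of_mem_transportPlans hγ hν)) hf

theorem exists_almost_optimal_transportPlan [vol.IsAddHaarMeasure] [IsProbabilityMeasure μ]
    [IsProbabilityMeasure ν] (hμ : ∀ᵐ z ∂μ, z ∈ Metric.closedBall 0 (R : ℝ))
    (hν : ∀ᵐ z ∂ν, z ∈ Metric.closedBall 0 (R : ℝ)) {δ : ℝ} (hδ : 0 < δ) :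
    ∃ π ∈ transportPlans μ ν,
      (∀ γ ∈ transportPlans μ ν, quadraticCost π ≤ quadraticCost γ + ENNReal.ofReal δ) ∧
        HasConcaveRenyiIntegrals vol π := by
  have hball : IsCompact (Metric.closedBall (0 : E) R) := isCompact_closedBall 0 _
  obtain ⟨h, m, K, hreg, hnear⟩ := exists_isRegularCost_near_norm_sq (E := E) (R + R) (half_pos hδ)
  have hh : Continuous fun p : E × E => h (p.2 - p.1) :=
    hreg.contDiff.continuous.comp (by fun_prop)
  obtain ⟨π, hπ, hopt, Γ, φ, ψ, hπΓ, hΓ⟩ := exists_optimal_transportPlan_and_contact hball hball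
    hμ hν hh
  have hnear' {γ : Measure (E × E)} (hγ : γ ∈ transportPlans μ ν) :
      ∀ᵐ p ∂γ, |h (p.2 - p.1) - ‖p.2 - p.1‖ ^ 2| ≤ δ / 2 := by
    filter_upwards [ae_fst_of_mem_transportPlans hγ hμ, ae_snd_of_mem_transportPlans hγ hν]
      with p hfst hsnd
    exact hnear _ ((norm_sub_le _ _).trans
      (add_le_add (mem_closedBall_zero_iff.1 hsnd) (mem_closedBall_zero_iff.1 hfst)))
  have hint {γ : Measure (E × E)} (hγ : γ ∈ transportPlans μ ν) {f : E × E → ℝ}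
      (hf : Continuous f) : Integrable f γ := integrable_of_mem_transportPlans hμ hν hγ hf
  have := hπ.1
  refine ⟨π, hπ, fun γ hγ => ?_, fun t ht b hb hb_dim =>
    hreg.renyiIntegral_interpolate_ge ht.1 ht.2 hπΓ hΓ hb.1 hb.2 hb_dim⟩
  have := hγ.1
  have hcost : Continuous fun p : E × E => ‖p.2 - p.1‖ ^ 2 := by fun_prop
  rw [quadraticCost_eq_ofReal_integral (hint hπ hcost),
    quadraticCost_eq_ofReal_integral (hint hγ hcost),
    ← ENNReal.ofReal_add (integral_nonneg fun p => sq_nonneg _) hδ.le,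
    ← mul_div_cancel₀ δ two_ne_zero]
  exact ENNReal.ofReal_le_ofReal (integral_le_add_of_abs_sub_le (hint hπ hcost) (hint hγ hcost)
    (hint hπ hh) (hint hγ hh) (hnear' hπ) (hnear' hγ) (hopt γ hγ))

theorem ae_map_interpolate_mem_closedBall (hμ : ∀ᵐ z ∂μ, z ∈ Metric.closedBall 0 (R : ℝ))
    (hν : ∀ᵐ z ∂ν, z ∈ Metric.closedBall 0 (R : ℝ)) {π : Measure (E × E)}
    (hπ : π ∈ transportPlans μ ν) {t : ℝ} (ht : t ∈ Icc 0 1) :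
    ∀ᵐ z ∂π.map (interpolate t), z ∈ Metric.closedBall 0 (R : ℝ) := by
  refine (ae_map_iff (continuous_interpolate t).measurable.aemeasurable
    Metric.isClosed_closedBall.measurableSet).2 ?_
  filter_upwards [ae_fst_of_mem_transportPlans hπ hμ, ae_snd_of_mem_transportPlans hπ hν]
    with p hfst hsnd
  exact interpolate_mem_closedBall ht hfst hsnd

theorem hasConcaveRenyiIntegrals_of_tendsto [vol.IsAddHaarMeasure]
    (hμ : ∀ᵐ z ∂μ, z ∈ Metric.closedBall 0 (R : ℝ))
    (hν : ∀ᵐ z ∂ν, z ∈ Metric.closedBall 0 (R : ℝ)) {πs : ℕ → ProbabilityMeasure (E × E)}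
    {π : ProbabilityMeasure (E × E)} (hlim : Tendsto πs atTop (𝓝 π))
    (hπs : ∀ n, (πs n : Measure (E × E)) ∈ transportPlans μ ν)
    (hπ : (π : Measure (E × E)) ∈ transportPlans μ ν)
    (hconc : ∀ n, HasConcaveRenyiIntegrals vol (πs n : Measure (E × E))) :
    HasConcaveRenyiIntegrals vol (π : Measure (E × E)) := by
  intro t ht b hb hb_dim
  have hlim_t := ProbabilityMeasure.tendsto_map_of_tendsto_of_continuous _ _ hlim
    (continuous_interpolate t)
  refine le_trans ?_ (limsup_renyiIntegral_le hlim_t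
    (fun n => ae_map_interpolate_mem_closedBall hμ hν (hπs n) (Ioo_subset_Icc_self ht))
    (ae_map_interpolate_mem_closedBall hμ hν hπ (Ioo_subset_Icc_self ht)) hb.1 hb.2)
  refine le_limsup_of_frequently_le (Frequently.of_forall fun n => ?_)
  rw [hπ.2.1, hπ.2.2, ← (hπs n).2.1, ← (hπs n).2.2]
  exact hconc n t ht b hb hb_dim

theorem exists_optimal_transportPlan_hasConcaveRenyiIntegrals (vol : Measure E)
    [vol.IsAddHaarMeasure] [IsProbabilityMeasure μ] [IsProbabilityMeasure ν]
    (hμ : ∀ᵐ z ∂μ, z ∈ Metric.closedBall 0 (R : ℝ))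
    (hν : ∀ᵐ z ∂ν, z ∈ Metric.closedBall 0 (R : ℝ)) :
    ∃ π ∈ transportPlans μ ν, IsMinOn quadraticCost (transportPlans μ ν) π ∧
      HasConcaveRenyiIntegrals vol π := by
  have := FiniteDimensional.complete ℝ E
  choose πs hπs hopt hconc using fun n : ℕ =>
    exists_almost_optimal_transportPlan (vol := vol) hμ hν (Nat.one_div_pos_of_nat (n := n))
  let πs' (n : ℕ) : ProbabilityMeasure (E × E) := ⟨πs n, (hπs n).1⟩
  obtain ⟨π, hπ, k, hk, hlim⟩ := (isCompact_transportPlans μ ν).tendsto_subseq (x := πs') hπs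
  refine ⟨π, hπ, fun γ hγ => ?_, hasConcaveRenyiIntegrals_of_tendsto hμ hν hlim
    (fun n => hπs (k n)) hπ fun n => hconc (k n)⟩
  have herr : Tendsto (fun n => quadraticCost γ + ENNReal.ofReal (1 / ((k n : ℝ) + 1))) atTop
      (𝓝 (quadraticCost γ)) := by
    have := (tendsto_one_div_add_atTop_nhds_zero_nat (𝕜 := ℝ)).comp hk.tendsto_atTop
    simpa using (ENNReal.tendsto_ofReal this).const_add (quadraticCost γ)
  calc quadraticCost (π : Measure (E × E))
      ≤ liminf (fun n => quadraticCost (πs (k n))) atTop := quadraticCost_le_liminf hlim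
    _ ≤ liminf (fun n => quadraticCost γ + ENNReal.ofReal (1 / ((k n : ℝ) + 1))) atTop :=
        liminf_le_liminf (Eventually.of_forall fun n => hopt (k n) γ hγ)
    _ = quadraticCost γ := herr.liminf_eq

end OptimalPlan

section CurvatureDimension

/-- The Rényi entropy `Ent_N`; the singular part of `μ` does not contribute. -/
def renyiEntropy {X : Type*} [MeasurableSpace X] (N : ℝ) (vol μ : Measure X) : ℝ :=
  -∫ z, (μ.rnDeriv vol z).toReal ^ (1 - 1 / N) ∂vol

theorem renyiEntropy_eq_neg_toReal {X : Type*} [MeasurableSpace X] {N : ℝ} {vol μ : Measure X}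
    (hfin : renyiIntegral (1 / N) vol μ ≠ ∞) :
    renyiEntropy N vol μ = -(renyiIntegral (1 / N) vol μ).toReal := by
  have hmeas : Measurable fun z => μ.rnDeriv vol z ^ (1 - 1 / N) :=
    (Measure.measurable_rnDeriv μ vol).pow_const _
  simp only [renyiEntropy, renyiIntegral, ENNReal.toReal_rpow]
  rw [integral_toReal hmeas.aemeasurable (ae_lt_top hmeas hfin)]

variable {E : Type*} [NormedAddCommGroup E] [MeasurableSpace E]

theorem lintegral_nnnorm_sq_lt_top {μ : Measure E} [IsFiniteMeasure μ] {R : NNReal}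
    (hμ : ∀ᵐ z ∂μ, z ∈ Metric.closedBall 0 (R : ℝ)) : ∫⁻ z, (‖z‖₊ : ℝ≥0∞) ^ 2 ∂μ < ∞ :=
  calc ∫⁻ z, (‖z‖₊ : ℝ≥0∞) ^ 2 ∂μ ≤ ∫⁻ _, (R : ℝ≥0∞) ^ 2 ∂μ := by
        refine lintegral_mono_ae (hμ.mono fun z hz => ?_)
        have := mem_closedBall_zero_iff.1 hz
        gcongr
        exact_mod_cast this
    _ < ∞ := by
        rw [lintegral_const]
        exact ENNReal.mul_lt_top (by finiteness) (measure_lt_top μ univ)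

theorem exists_closedBall_of_isBounded {μ ν : Measure E} {K L : Set E}
    (hK : Bornology.IsBounded K) (hμ : μ Kᶜ = 0) (hL : Bornology.IsBounded L) (hν : ν Lᶜ = 0) :
    ∃ R : NNReal, (∀ᵐ z ∂μ, z ∈ Metric.closedBall 0 (R : ℝ)) ∧
      ∀ᵐ z ∂ν, z ∈ Metric.closedBall 0 (R : ℝ) := by
  obtain ⟨R, hR0, hR⟩ := (hK.union hL).subset_closedBall_lt 0 0
  have hKR := subset_union_left.trans hR
  have hLR := subset_union_right.trans hR
  exact ⟨⟨R, hR0.le⟩, measure_mono_null (compl_subset_compl.2 hKR) hμ,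
    measure_mono_null (compl_subset_compl.2 hLR) hν⟩

variable [NormedSpace ℝ E] [FiniteDimensional ℝ E] [BorelSpace E] (vol : Measure E)
  [vol.IsAddHaarMeasure]

theorem renyiIntegral_ne_top {μ : Measure E} [IsFiniteMeasure μ] {R : ℝ}
    (hμ : ∀ᵐ z ∂μ, z ∈ Metric.closedBall 0 R) {b : ℝ} (hb : 0 ≤ b) (hb1 : b < 1) :
    renyiIntegral b vol μ ≠ ∞ :=
  ne_top_of_le_ne_top (ENNReal.mul_ne_top
      (ENNReal.rpow_ne_top_of_nonneg (sub_nonneg.2 hb1.le) (measure_ne_top μ _))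
      (ENNReal.rpow_ne_top_of_nonneg hb measure_closedBall_lt_top.ne))
    (renyiIntegral_le_of_ae_mem hb hb1 Metric.isClosed_closedBall.measurableSet hμ)

variable {vol}

theorem HasConcaveRenyiIntegrals.renyiEntropy_le {μ ν : Measure E} {R : NNReal}
    (hμ : ∀ᵐ z ∂μ, z ∈ Metric.closedBall 0 (R : ℝ))
    (hν : ∀ᵐ z ∂ν, z ∈ Metric.closedBall 0 (R : ℝ)) {π : Measure (E × E)}
    (hπ : π ∈ transportPlans μ ν) (hconc : HasConcaveRenyiIntegrals vol π) {N : ℝ} (hN1 : 1 < N)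
    (hN : finrank ℝ E ≤ N) {t : ℝ} (ht : t ∈ Icc 0 1) :
    renyiEntropy N vol (π.map (interpolate t)) ≤
      (1 - t) * renyiEntropy N vol μ + t * renyiEntropy N vol ν := by
  obtain ⟨_, rfl, rfl⟩ := id hπ
  rcases ht.1.eq_or_lt with rfl | ht0
  · simp [interpolate_zero]
  rcases ht.2.eq_or_lt with rfl | ht1
  · simp [interpolate_one]
  have hN0 := zero_lt_one.trans hN1
  have hb : 1 / N ∈ Ioo (0 : ℝ) 1 := ⟨one_div_pos.2 hN0, (div_lt_one hN0).2 hN1⟩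
  have hb_dim : 1 / N * finrank ℝ E ≤ 1 := by
    rwa [one_div_mul_eq_div, div_le_one hN0]
  have hfst := renyiIntegral_ne_top vol hμ hb.1.le hb.2
  have hsnd := renyiIntegral_ne_top vol hν hb.1.le hb.2
  have ht := renyiIntegral_ne_top vol (ae_map_interpolate_mem_closedBall hμ hν hπ ht) hb.1.le hb.2
  rw [renyiEntropy_eq_neg_toReal hfst, renyiEntropy_eq_neg_toReal hsnd,
    renyiEntropy_eq_neg_toReal ht]
  have hle := ENNReal.toReal_mono ht (hconc t ⟨ht0, ht1⟩ (1 / N) hb hb_dim)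
  rw [ENNReal.toReal_add (by finiteness) (by finiteness), ENNReal.toReal_mul, ENNReal.toReal_mul,
    ENNReal.toReal_ofReal (sub_nonneg.2 ht1.le), ENNReal.toReal_ofReal ht0.le] at hle
  linarith

theorem cd_zero_two_real_plane_sup_norm_general (vol : Measure E) [vol.IsAddHaarMeasure]
    (μ0 μ1 : Measure E) [IsProbabilityMeasure μ0] [IsProbabilityMeasure μ1]
    (K0 : Set E) (hK0 : Bornology.IsBounded K0) (hsupp0 : μ0 K0ᶜ = 0)
    (K1 : Set E) (hK1 : Bornology.IsBounded K1) (hsupp1 : μ1 K1ᶜ = 0) :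
    ∃ μ : ℝ → Measure E,
      μ 0 = μ0 ∧ μ 1 = μ1 ∧
      (∀ t ∈ Icc (0 : ℝ) 1,
        IsProbabilityMeasure (μ t) ∧ ∫⁻ z, (‖z‖₊ : ℝ≥0∞) ^ 2 ∂(μ t) < ∞) ∧
      (∀ s ∈ Icc (0 : ℝ) 1, ∀ t ∈ Icc (0 : ℝ) 1,
        wasserstein₂ (μ s) (μ t) = ENNReal.ofReal |s - t| * wasserstein₂ μ0 μ1) ∧
      (∀ N : ℝ, 1 < N → finrank ℝ E ≤ N → ∀ t ∈ Icc (0 : ℝ) 1,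
        renyiEntropy N vol (μ t) ≤
          (1 - t) * renyiEntropy N vol μ0 + t * renyiEntropy N vol μ1) := by
  obtain ⟨R, hμ0, hμ1⟩ := exists_closedBall_of_isBounded hK0 hsupp0 hK1 hsupp1
  obtain ⟨π, hπ, hmin, hconc⟩ :=
    exists_optimal_transportPlan_hasConcaveRenyiIntegrals vol hμ0 hμ1
  have := hπ.1
  have hprob (t : ℝ) : IsProbabilityMeasure (π.map (interpolate t)) :=
    Measure.isProbabilityMeasure_map (continuous_interpolate t).measurable.aemeasurable
  have hfin : quadraticCost π ≠ ∞ := by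
    rw [quadraticCost_eq_ofReal_integral
      (integrable_of_mem_transportPlans hμ0 hμ1 hπ (by fun_prop))]
    exact ENNReal.ofReal_ne_top
  have := FiniteDimensional.complete ℝ E
  refine ⟨fun t => π.map (interpolate t), ?_, ?_, fun t ht => ⟨hprob t, ?_⟩,
    fun s hs t ht => wasserstein₂_map_interpolate hπ hmin hfin hs ht,
    fun N hN1 hN t ht => hconc.renyiEntropy_le hμ0 hμ1 hπ hN1 hN ht⟩
  · simpa only [interpolate_zero] using hπ.2.1
  · simpa only [interpolate_one] using hπ.2.2
  · exact lintegral_nnnorm_sq_lt_top (ae_map_interpolate_mem_closedBall hμ0 hμ1 hπ ht)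

end CurvatureDimension

/-- (ℝ², ‖·‖_∞, Lebesgue) satisfies CD(0,2): between any two boundedly supported probability
measures there is a W₂-geodesic along which Ent_{N'} is convex for every N' ≥ 2. -/
theorem cd_zero_two_real_plane_sup_norm
    (μ0 μ1 : Measure (ℝ × ℝ)) [IsProbabilityMeasure μ0] [IsProbabilityMeasure μ1]
    (K0 : Set (ℝ × ℝ)) (hK0 : Bornology.IsBounded K0) (hsupp0 : μ0 K0ᶜ = 0)
    (K1 : Set (ℝ × ℝ)) (hK1 : Bornology.IsBounded K1) (hsupp1 : μ1 K1ᶜ = 0) :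
    ∃ μ : ℝ → Measure (ℝ × ℝ),
      μ 0 = μ0 ∧ μ 1 = μ1 ∧
      (∀ t ∈ Set.Icc (0:ℝ) 1,
        IsProbabilityMeasure (μ t) ∧ ∫⁻ z, (‖z‖₊ : ℝ≥0∞) ^ 2 ∂(μ t) < ⊤) ∧
      (∀ s ∈ Set.Icc (0:ℝ) 1, ∀ t ∈ Set.Icc (0:ℝ) 1,
        W2 (μ s) (μ t) = ENNReal.ofReal |s - t| * W2 μ0 μ1) ∧
      (∀ N' : ℝ, 2 ≤ N' → ∀ t ∈ Set.Icc (0:ℝ) 1,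
        EntN N' volume (μ t) ≤ (1 - t) * EntN N' volume μ0 + t * EntN N' volume μ1) := by
  obtain ⟨μ, h0, h1, hprob, hW, hEnt⟩ :=
    cd_zero_two_real_plane_sup_norm_general volume μ0 μ1 K0 hK0 hsupp0 K1 hK1 hsupp1
  exact ⟨μ, h0, h1, hprob, hW, fun N hN => hEnt N (by linarith) (by simpa using hN)⟩

end
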